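/- arXiv:1701.01367 — 3 statements merged into one kernel-verified Lean document; each statement's English description precedes it below -/
import Mathlib

section
/- Let F be a linked field of characteristic 2, i.e. every two quaternion F-algebras share a common maximal subfield (equivalently, every Albert form over F, that is, every 6-dimensional nonsingular quadratic form with trivial Arf invariant, is isotropic). Then I_q⁴F = 0; equivalently, every quadratic 4-fold Pfister form over F is hyperbolic. -/
/-!
Let `Q = ⟨⟨β, α]]` be the norm form of a quaternion algebra.  For a norm `n = N(k)` of
`[1, α]`, the vector `1` and a trace-one vector with component `k` in `β[1, α]` span a plane of
`Q` isometric to `[1, α + βn]`.  Put `d = α/β`.  Among the norms of `[1, α]` are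
`d² + d + α`, `α` and `d²`, and their sum is `d`; so the planes `[1, α + β(d² + d + α)]`,
`γ[1, α + βα]` and `δ[1, α + βd²]` have Arf invariants adding up to `3α + βd = 4α = 0`.  Their
orthogonal sum is therefore an Albert form, and it is a subform of `Q ⊥ γQ ⊥ δQ`, hence of
`⟨⟨δ, γ, β, α]]` (`pfister4_isotropic`).  Linkage makes the 4-fold Pfister form isotropic.

It remains to see that an isotropic quadratic Pfister form is hyperbolic.  This goes by induction
on the number of slots: the properties collected in `PfisterLike` hold for `[1, α]` and pass from
`φ` to `φ ⊥ cφ` (`PfisterLike.step`).  The key points are that nonzero values of `φ` are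
similarity factors (roundness) and that `φ ⊥ φ` is hyperbolic in characteristic 2.
-/


/-!
STATEMENT 9 (Theorem `newElmanLam`):
Let `F` be a linked field of characteristic 2, i.e. every Albert form over `F`
(every 6-dimensional nonsingular quadratic form with trivial Arf invariant) is
isotropic.  Then `I_q⁴F = 0`, equivalently every quadratic 4-fold Pfister form over
`F` is hyperbolic (isometric to an orthogonal sum of 8 hyperbolic planes `ℍ = [0,0]`).

Here `[u,v]` denotes the two-dimensional quadratic form `(s,t) ↦ us² + st + vt²`, and
the quadratic `n`-fold Pfister form `⟨⟨c₁,…,c_{n−1}, v]] = ⟨1,c₁⟩⊗…⊗⟨1,c_{n−1}⟩⊗[1,v]`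
(with `cᵢ ∈ F^×`) is built up by `⟨1,c⟩ ⊗ φ = φ ⊥ c·φ` starting from `[1,v]`.  Every
6-dimensional nonsingular quadratic form over `F` is isometric to
`[a₀,b₀] ⊥ [a₁,b₁] ⊥ [a₂,b₂]` (and each such form is nonsingular); its Arf invariant
is the class of `a₀b₀ + a₁b₁ + a₂b₂` in `F/℘(F)`; so "every Albert form is isotropic"
means each such sum with `a₀b₀ + a₁b₁ + a₂b₂ ∈ ℘(F)` has a nontrivial zero.
-/

noncomputable section

open QuadraticMap

/-- The two-dimensional quadratic form `[a,b] : (x,y) ↦ ax² + xy + by²`. -/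
def twoDimForm (F : Type*) [Field F] (a b : F) : QuadraticForm F (Fin 2 → F) :=
  a • proj 0 0 + proj 0 1 + b • proj 1 1

/-- The quadratic 2-fold Pfister form `⟨⟨c, b]] = ⟨1,c⟩ ⊗ [1,b] = [1,b] ⊥ c·[1,b]`. -/
def pfister2 (F : Type*) [Field F] (c b : F) :
    QuadraticForm F ((Fin 2 → F) × (Fin 2 → F)) :=
  (twoDimForm F 1 b).prod (c • twoDimForm F 1 b)

/-- The quadratic 3-fold Pfister form `⟨⟨c₂, c₁, b]] = ⟨⟨c₁,b]] ⊥ c₂·⟨⟨c₁,b]]`. -/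
def pfister3 (F : Type*) [Field F] (c₂ c₁ b : F) :=
  (pfister2 F c₁ b).prod (c₂ • pfister2 F c₁ b)

/-- The quadratic 4-fold Pfister form
`⟨⟨c₃, c₂, c₁, b]] = ⟨⟨c₂, c₁, b]] ⊥ c₃·⟨⟨c₂, c₁, b]]`. -/
def pfister4 (F : Type*) [Field F] (c₃ c₂ c₁ b : F) :=
  (pfister3 F c₂ c₁ b).prod (c₃ • pfister3 F c₂ c₁ b)

/-- The Albert form `[a₀,b₀] ⊥ [a₁,b₁] ⊥ [a₂,b₂]`; it is an Albert form precisely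
when additionally `a₀b₀ + a₁b₁ + a₂b₂ ∈ ℘(F)` (trivial Arf invariant). -/
def albertForm (F : Type*) [Field F] (a b : Fin 3 → F) :
    QuadraticForm F ((Fin 2 → F) × ((Fin 2 → F) × (Fin 2 → F))) :=
  (twoDimForm F (a 0) (b 0)).prod
    ((twoDimForm F (a 1) (b 1)).prod (twoDimForm F (a 2) (b 2)))

/-- The hyperbolic plane `ℍ = [0,0]`. -/
def hypPlane (F : Type*) [Field F] := twoDimForm F 0 0

/-- The orthogonal sum of 8 hyperbolic planes `ℍ = [0,0]`, on the same underlying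
space as a quadratic 4-fold Pfister form. -/
def hyperbolic16 (F : Type*) [Field F] :=
  (((hypPlane F).prod (hypPlane F)).prod ((hypPlane F).prod (hypPlane F))).prod
    (((hypPlane F).prod (hypPlane F)).prod ((hypPlane F).prod (hypPlane F)))

section Pfister

variable {F : Type*} [Field F]
variable {V W : Type*} [AddCommGroup V] [Module F V] [AddCommGroup W] [Module F W]

theorem equiv_smul {φ : QuadraticForm F V} {ψ : QuadraticForm F W} (c : F)
    (h : φ.Equivalent ψ) : (c • φ).Equivalent (c • ψ) := by
  obtain ⟨e⟩ := h
  exact ⟨⟨e.toLinearEquiv, fun m => congrArg (c • ·) (e.map_app m)⟩⟩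

theorem smul_prod (c : F) (φ : QuadraticForm F V) (ψ : QuadraticForm F W) :
    c • φ.prod ψ = (c • φ).prod (c • ψ) := by
  ext v
  simp [mul_add]

/-- Scaling by a nonzero square does not change the isometry class. -/
theorem smul_sq_equiv (φ : QuadraticForm F V) {c : F} (hc : c ≠ 0) :
    ((c * c) • φ).Equivalent φ :=
  ⟨⟨LinearEquiv.smulOfNeZero F V c hc, fun m => by simp [QuadraticMap.map_smul]⟩⟩

theorem twoDimForm_apply (a b : F) (v : Fin 2 → F) :
    twoDimForm F a b v = a * (v 0 * v 0) + v 0 * v 1 + b * (v 1 * v 1) := by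
  simp [twoDimForm]

variable [CharP F 2]

/-- The chain equivalence `⟨r, t⟩ ≅ ⟨r + t, (r + t)rt⟩` tensored with `φ`. -/
theorem chain_equiv (φ : QuadraticForm F V) {r t : F} (h : r + t ≠ 0) :
    (((r + t) • φ).prod (((r + t) * (r * t)) • φ)).Equivalent ((r • φ).prod (t • φ)) := by
  have h2 : (2 : F) = 0 := CharTwo.two_eq_zero
  have hd : r - t ≠ 0 := by rwa [CharTwo.sub_eq_add]
  refine ⟨⟨{
    toFun := fun p => (p.1 + t • p.2, p.1 + r • p.2)
    invFun := fun p => (p.1 - t • (r - t)⁻¹ • (p.2 - p.1), (r - t)⁻¹ • (p.2 - p.1))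
    map_add' := ?_, map_smul' := ?_, left_inv := ?_, right_inv := ?_ }, ?_⟩⟩
  · rintro ⟨a, b⟩ ⟨a', b'⟩
    ext <;> simp <;> module
  · rintro d ⟨a, b⟩
    ext <;> simp <;> module
  · rintro ⟨a, b⟩
    have hb : (r - t)⁻¹ • (a + r • b - (a + t • b)) = b := by
      rw [add_sub_add_left_eq_sub, ← sub_smul, inv_smul_smul₀ hd]
    simp only [hb, add_sub_cancel_right]
  · rintro ⟨x, y⟩
    have hb : r • (r - t)⁻¹ • (y - x) - t • (r - t)⁻¹ • (y - x) = y - x := by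
      rw [← sub_smul, smul_inv_smul₀ hd]
    ext
    · simp
    · change x - t • _ + r • _ = y
      rw [sub_add_eq_add_sub, add_sub_assoc, hb, add_sub_cancel]
  · rintro ⟨a, b⟩
    have e1 : ∀ s : F, φ (a + s • b) = φ a + s * s * φ b + s * polar φ a b := by
      intro s
      rw [QuadraticMap.map_add (f := φ), QuadraticMap.map_smul, polar_smul_right]
      simp
    change r * φ (a + t • b) + t * φ (a + r • b) = (r + t) * φ a + (r + t) * (r * t) * φ b
    rw [e1, e1]
    linear_combination r * t * polar φ a b * h2

/-- The properties of a quadratic Pfister form `φ` that propagate along `φ ↦ φ ⊥ cφ`, relative to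
a model `η` of the hyperbolic form on a space of the same dimension. -/
structure PfisterLike (φ : QuadraticForm F V) (η : QuadraticForm F W) : Prop where
  round : ∀ v, φ v ≠ 0 → (φ v • φ).Equivalent φ
  hyp : ∀ v, v ≠ 0 → φ v = 0 → φ.Equivalent η
  double : (φ.prod φ).Equivalent (η.prod η)
  scale : ∀ c : F, c ≠ 0 → (c • η).Equivalent η

theorem PfisterLike.step {φ : QuadraticForm F V} {η : QuadraticForm F W}
    (H : PfisterLike φ η) {c : F} (hc : c ≠ 0) :
    PfisterLike (φ.prod (c • φ)) (η.prod η) where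
  round := by
    rintro ⟨v, w⟩ h
    rw [smul_prod]
    simp only [prod_apply, smul_apply, smul_eq_mul] at h ⊢
    by_cases hw : φ w = 0
    · simp only [hw, mul_zero, add_zero] at h ⊢
      rw [smul_comm]
      exact (H.round v h).prod (equiv_smul c (H.round v h))
    have hφw := H.round w hw
    by_cases hv : φ v = 0
    · simp only [hv, zero_add] at h ⊢
      have e₁ : ((c * φ w) • φ).Equivalent (c • φ) := by
        rw [mul_smul]
        exact equiv_smul c hφw
      have e₂ : ((c * φ w) • c • φ).Equivalent φ := by
        rw [smul_smul, mul_right_comm, mul_smul]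
        exact (equiv_smul _ hφw).trans (smul_sq_equiv φ hc)
      exact (e₁.prod e₂).trans ⟨IsometryEquiv.prodComm _ _⟩
    have hφv := H.round v hv
    set r := φ v
    set s := φ w
    have e₁ : ((r + c * s) • c • φ).Equivalent (((r + c * s) * (r * (c * s))) • φ) := by
      have : ((r + c * s) * (r * (c * s))) • φ = (r + c * s) • c • r • s • φ := by
        simp only [smul_smul]
        congr 1
        ring
      rw [this]
      exact equiv_smul _ (equiv_smul _ ((equiv_smul _ hφw).trans hφv).symm)
    have e₂ : ((c * s) • φ).Equivalent (c • φ) := by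
      rw [mul_smul]
      exact equiv_smul c hφw
    exact (((Equivalent.refl _).prod e₁).trans (chain_equiv φ h)).trans (hφv.prod e₂)
  hyp := by
    rintro ⟨v, w⟩ hne h
    simp only [prod_apply, smul_apply, smul_eq_mul] at h
    by_cases hiso : ∃ u, u ≠ 0 ∧ φ u = 0
    · obtain ⟨u, hu, hu0⟩ := hiso
      have e := H.hyp u hu hu0
      exact e.prod ((equiv_smul c e).trans (H.scale c hc))
    have hani : ∀ u, φ u = 0 → u = 0 := fun u hu => by
      by_contra hu'
      exact hiso ⟨u, hu', hu⟩
    have hcw : φ v = c * φ w := by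
      linear_combination h - c * φ w * (CharTwo.two_eq_zero : (2 : F) = 0)
    have hw : φ w ≠ 0 := by
      intro hw
      rw [hw, mul_zero] at hcw
      exact hne (by rw [hani v hcw, hani w hw]; rfl)
    have hv : φ v ≠ 0 := by
      rw [hcw]
      exact mul_ne_zero hc hw
    have e : (c • φ).Equivalent φ := by
      refine (equiv_smul c (H.round w hw)).symm.trans ?_
      rw [smul_smul, ← hcw]
      exact H.round v hv
    exact ((Equivalent.refl φ).prod e).trans H.double
  double := by
    refine Equivalent.trans ⟨IsometryEquiv.prodProdProdComm _ _ _ _⟩ ?_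
    refine H.double.prod ?_
    rw [← smul_prod]
    refine (equiv_smul c H.double).trans ?_
    rw [smul_prod]
    exact (H.scale c hc).prod (H.scale c hc)
  scale := fun d hd => by
    rw [smul_prod]
    exact (H.scale d hd).prod (H.scale d hd)

/-- The linear automorphism of `F²` with matrix `!![a, b; c, d]`. -/
def linEquiv2 (a b c d : F) (h : a * d - b * c ≠ 0) : (Fin 2 → F) ≃ₗ[F] (Fin 2 → F) where
  toFun v := ![a * v 0 + b * v 1, c * v 0 + d * v 1]
  invFun v := ![(a * d - b * c)⁻¹ * (d * v 0 - b * v 1),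
    (a * d - b * c)⁻¹ * (a * v 1 - c * v 0)]
  map_add' v w := by
    ext i
    fin_cases i <;> simp <;> ring
  map_smul' r v := by
    ext i
    fin_cases i <;> simp <;> ring
  left_inv v := by
    have := inv_mul_cancel₀ h
    ext i
    fin_cases i <;> simp
    · linear_combination v 0 * this
    · linear_combination v 1 * this
  right_inv v := by
    have := inv_mul_cancel₀ h
    ext i
    fin_cases i <;> simp
    · linear_combination v 0 * this
    · linear_combination v 1 * this

/-- The norm form `[1, α]` of the quadratic étale algebra `F[ω]`, `ω² = ω + α`. -/
theorem pfisterLike_twoDimForm (α : F) : PfisterLike (twoDimForm F 1 α) (hypPlane F) where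
  round := by
    intro k hk
    have h2 : (2 : F) = 0 := CharTwo.two_eq_zero
    rw [twoDimForm_apply] at hk
    -- multiplication by `k 0 + k 1 * ω`
    refine ⟨⟨linEquiv2 (k 0) (α * k 1) (k 1) (k 0 + k 1) ?_, fun v => ?_⟩⟩
    · intro h
      apply hk
      linear_combination h + α * k 1 * k 1 * h2
    · simp only [linEquiv2, twoDimForm_apply, smul_apply, smul_eq_mul]
      simp
      linear_combination (2 * k 0 * v 0 * α * k 1 * v 1 + k 0 * α * k 1 * v 1 ^ 2 + v 0 * α * k 1 ^ 2 * v 1 + α * k 1 ^ 2 * v 1 ^ 2) * h2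
  hyp := by
    intro k hne hk
    have h2 : (2 : F) = 0 := CharTwo.two_eq_zero
    rw [twoDimForm_apply] at hk
    have hk1 : k 1 ≠ 0 := by
      intro h1
      apply hne
      have h0 : k 0 = 0 := by simpa [h1] using hk
      ext i
      fin_cases i <;> simp [h0, h1]
    -- a root `r` of `X² + X + α` gives the factorization `(x + r y)(x + (r + 1) y)`
    obtain ⟨r, hr⟩ : ∃ r : F, r * r + r + α = 0 := ⟨k 0 / k 1, by
      field_simp
      linear_combination hk⟩
    refine ⟨⟨linEquiv2 1 r 1 (r + 1) (by simp), fun v => ?_⟩⟩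
    simp only [linEquiv2, hypPlane, twoDimForm_apply]
    simp
    linear_combination v 1 * v 1 * hr + (r * v 0 * v 1 - α * v 1 * v 1) * h2
  double := by
    have h2 : (2 : F) = 0 := CharTwo.two_eq_zero
    -- in the coordinates `a = x + z`, `b = y + w` the form is `a(a + b + w) + b(αb + z)`
    refine ⟨⟨{
      toFun := fun p => (![p.1 0 + p.2 0, p.1 0 + p.2 0 + p.1 1 + p.2 1 + p.2 1],
        ![p.1 1 + p.2 1, α * (p.1 1 + p.2 1) + p.2 0])
      invFun := fun q => (![q.1 0 - (q.2 1 - α * q.2 0), q.2 0 - (q.1 1 - q.1 0 - q.2 0)],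
        ![q.2 1 - α * q.2 0, q.1 1 - q.1 0 - q.2 0])
      map_add' := ?_, map_smul' := ?_, left_inv := ?_, right_inv := ?_ }, ?_⟩⟩
    · rintro ⟨v, w⟩ ⟨v', w'⟩
      ext i <;> fin_cases i <;> simp <;> ring
    · rintro r ⟨v, w⟩
      ext i <;> fin_cases i <;> simp <;> ring
    · rintro ⟨v, w⟩
      ext i <;> fin_cases i <;> simp <;> ring
    · rintro ⟨v, w⟩
      ext i <;> fin_cases i <;> simp
      ring
    · rintro ⟨v, w⟩
      simp only [hypPlane, prod_apply, twoDimForm_apply]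
      simp
      linear_combination (v 0 * w 0 + v 0 * w 1 + w 0 * v 1 + w 0 * w 1 + α * v 1 * w 1) * h2
  scale := by
    intro c hc
    refine ⟨⟨linEquiv2 c 0 0 1 (by simpa using hc), fun v => ?_⟩⟩
    simp only [linEquiv2, hypPlane, twoDimForm_apply, smul_apply, smul_eq_mul]
    simp
    ring

theorem pfister4_pfisterLike {δ γ β : F} (α : F) (hδ : δ ≠ 0) (hγ : γ ≠ 0) (hβ : β ≠ 0) :
    PfisterLike (pfister4 F δ γ β α) (hyperbolic16 F) :=
  (((pfisterLike_twoDimForm α).step hβ).step hγ).step hδ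

/-- Over a linked field every quadratic 4-fold Pfister form is isotropic, because it contains an
Albert form. -/
theorem pfister4_isotropic
    (hlinked : ∀ a b : Fin 3 → F,
      (∃ t : F, a 0 * b 0 + a 1 * b 1 + a 2 * b 2 = t ^ 2 + t) →
      ∃ v, v ≠ 0 ∧ albertForm F a b v = 0)
    {δ γ β : F} (α : F) (hδ : δ ≠ 0) (hγ : γ ≠ 0) (hβ : β ≠ 0) :
    ∃ v, v ≠ 0 ∧ pfister4 F δ γ β α v = 0 := by
  have h2 : (2 : F) = 0 := CharTwo.two_eq_zero
  obtain ⟨d, hd⟩ : ∃ d : F, β * d = α := ⟨α / β, mul_div_cancel₀ α hβ⟩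
  obtain ⟨⟨x, y, z⟩, hne, h⟩ := hlinked ![1, γ, δ]
    ![α + β * (d * d + d + α), (α + β * α) / γ, (α + β * (d * d)) / δ] ⟨0, by
      simp
      field_simp
      linear_combination hd + (2 * α + β * d * d + β * α) * h2⟩
  -- The planes are spanned by `1` and `ω + k`, where `k` in the second copy of `[1, α]` is
  -- `(d, 1)`, `(0, 1)` and `(d, 0)`; the factors `γ⁻¹` and `δ⁻¹` turn the scaled planes
  -- `γ[1, s]` and `δ[1, s]` into the shape `[γ, s/γ]` and `[δ, s/δ]`.
  refine ⟨((((![x 0, x 1], ![d * x 1, x 1])), (![y 0, y 1 / γ], ![0, y 1 / γ])),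
    ((![z 0, z 1 / δ], ![d * (z 1 / δ), 0]), 0)), ?_, ?_⟩
  · intro h0
    apply hne
    simp only [Prod.mk_eq_zero] at h0 ⊢
    obtain ⟨⟨⟨hx, -⟩, hy, -⟩, ⟨hz, -⟩, -⟩ := h0
    have hx0 := congrFun hx 0
    have hx1 := congrFun hx 1
    have hy0 := congrFun hy 0
    have hy1 := congrFun hy 1
    have hz0 := congrFun hz 0
    have hz1 := congrFun hz 1
    simp [hδ, hγ] at hx0 hx1 hy0 hy1 hz0 hz1
    simp only [funext_iff, Fin.forall_fin_two]
    exact ⟨⟨hx0, hx1⟩, ⟨hy0, hy1⟩, hz0, hz1⟩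
  · refine Eq.trans ?_ h
    have hπ : ∀ q₁ q₂ q₃ : (Fin 2 → F) × (Fin 2 → F), pfister4 F δ γ β α ((q₁, q₂), (q₃, 0)) =
        pfister2 F β α q₁ + γ * pfister2 F β α q₂ + δ * pfister2 F β α q₃ := by
      intro q₁ q₂ q₃
      change pfister2 F β α q₁ + γ * pfister2 F β α q₂ +
        δ * (pfister2 F β α q₃ + γ * pfister2 F β α 0) = _
      rw [QuadraticMap.map_zero]
      ring
    rw [hπ]
    simp only [pfister2, albertForm, prod_apply, smul_apply, smul_eq_mul, twoDimForm_apply,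
      Matrix.cons_val_zero, Matrix.cons_val_one, Matrix.cons_val]
    field_simp
    ring

end Pfister

theorem statement9 (F : Type*) [Field F] [CharP F 2]
    (hlinked : ∀ a b : Fin 3 → F,
      (∃ t : F, a 0 * b 0 + a 1 * b 1 + a 2 * b 2 = t ^ 2 + t) →
      ∃ v, v ≠ 0 ∧ albertForm F a b v = 0) :
    ∀ δ γ β α : F, δ ≠ 0 → γ ≠ 0 → β ≠ 0 →
      QuadraticMap.Equivalent (pfister4 F δ γ β α) (hyperbolic16 F) := by
  intro δ γ β α hδ hγ hβ
  obtain ⟨v, hv, h⟩ := pfister4_isotropic hlinked α hδ hγ hβ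
  exact (pfister4_pfisterLike α hδ hγ hβ).hyp v hv h

end
end

section
/- Let F be a linked field of characteristic 2, i.e. every two quaternion F-algebras share a common maximal subfield (equivalently, every Albert form over F, that is, every 6-dimensional nonsingular quadratic form with trivial Arf invariant, is isotropic). Then the u-invariant of F is 0, 2, 4 or 8. -/
/-!
STATEMENT 10 (Corollary `linkeduinv`):
Let `F` be a linked field of characteristic 2, i.e. every Albert form over `F`
(every 6-dimensional nonsingular quadratic form with trivial Arf invariant) is
isotropic.  Then the u-invariant of `F` is 0, 2, 4 or 8.

The u-invariant `u(F)` is the maximal dimension of an anisotropic nonsingular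
quadratic form over `F` (in characteristic 2 every nonsingular form has finite order
in the Witt group, so no order condition is needed).  Since every `m`-dimensional
`F`-vector space is isomorphic to `Fin m → F`, we express this as: the set of natural
numbers `m` such that some nonsingular anisotropic quadratic form on `Fin m → F`
exists has greatest element `u(F) ∈ {0, 2, 4, 8}`.

Here `[u,v]` denotes the two-dimensional quadratic form `(s,t) ↦ us² + st + vt²`.
Every 6-dimensional nonsingular quadratic form over `F` is isometric to
`[a₀,b₀] ⊥ [a₁,b₁] ⊥ [a₂,b₂]` (and each such form is nonsingular); its Arf invariant
is the class of `a₀b₀ + a₁b₁ + a₂b₂` in `F/℘(F)`; so "every Albert form is isotropic"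
means each such sum with `a₀b₀ + a₁b₁ + a₂b₂ ∈ ℘(F)` has a nontrivial zero.
-/

/-!
Every nonsingular form in characteristic `2` is an orthogonal sum of planes `[a,b]`, so `u(F) = 2n`
for the largest `n` such that some sum of `n` planes is anisotropic. It has to be shown that this
`n` is not `3` and is at most `4`.

The computations take place in the Witt group `Witt F`, presented as formal sums of planes with
coefficients modulo `2`, modulo hyperbolic sums; Witt cancellation (`HypS.symmDiff`) makes this a
group and shows that a sum of planes Witt equivalent to a shorter one is isotropic
(`isotropic_of_sum_eq`). The relations used are bilinearity of `[a,b]` in `a` and `b` and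
`[ax²,b] = [a,bx²]`, from which the usual theory of Pfister forms `⟨⟨c₂,c₁,α]]` is derived.

Isotropy of Albert forms enters in three ways. It makes two quaternion algebras linked (`link`); it
makes an Albert form Witt equivalent to a multiple of a two-fold Pfister form (`albert_red`); and it
shows that three-fold Pfister forms are universal, hence unchanged by scaling (`Pf_scale`, in other
words `I_q⁴F = 0`), and that the Witt class of a sum of two of them with the same étale slot is
again that of a three-fold Pfister form (`Pf_sum`).

With these, five planes are Witt equivalent to four (`five_to_four`), so `n ≤ 4`. If no sum of four
planes is anisotropic, three-fold Pfister forms are isotropic and so hyperbolic, and then three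
planes are Witt equivalent to two (`three_to_two`), so `n ≤ 2`.
-/

noncomputable section

open QuadraticMap

set_option linter.unusedSectionVars false

/-! ### Witt cancellation for sums of planes -/

section
variable {F : Type*} [Field F]

/-- The value `ax² + xy + by²` of the plane `[a,b]` (with `p = (a,b)`) at the vector `u = (x,y)`. -/
def planeVal (p u : F × F) : F := p.1 * u.1 ^ 2 + u.1 * u.2 + p.2 * u.2 ^ 2

/-- For a finite set `S` of planes, the orthogonal sum of the members of `S` is hyperbolic: it has
a totally singular subspace of dimension `#S`, half the dimension of the sum. A vector of the sum
is encoded as a function on all planes that vanishes outside `S`. -/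
def HypS (S : Finset (F × F)) : Prop :=
  ∃ T : Submodule F (F × F → F × F),
    (∀ t ∈ T, (∀ x ∉ S, t x = 0) ∧ ∑ x ∈ S, planeVal x (t x) = 0) ∧ S.card ≤ Module.finrank F T

/-- Restriction of families of vectors to a finite set of planes. -/
def resS (S : Finset (F × F)) : (F × F → F × F) →ₗ[F] (S → F × F) :=
  LinearMap.funLeft F (F × F) Subtype.val

lemma resS_apply (S : Finset (F × F)) (t : F × F → F × F) (x : S) : resS S t x = t x := rfl

lemma finiteDimensional_of_vanish (S : Finset (F × F)) (T : Submodule F (F × F → F × F))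
    (h : ∀ t ∈ T, ∀ x ∉ S, t x = 0) : FiniteDimensional F T := by
  apply FiniteDimensional.of_injective ((resS S).comp T.subtype)
  rw [← LinearMap.ker_eq_bot, LinearMap.ker_eq_bot']
  rintro ⟨t, ht⟩ h0
  ext1
  funext x
  by_cases hx : x ∈ S
  · exact congrFun h0 ⟨x, hx⟩
  · exact h t ht x hx

lemma HypS_of_injective {M : Type*} [AddCommGroup M] [Module F M] (S : Finset (F × F))
    (L : M →ₗ[F] (F × F → F × F)) (hL : Function.Injective L)
    (h0 : ∀ m, ∀ x ∉ S, L m x = 0) (hq : ∀ m, ∑ x ∈ S, planeVal x (L m x) = 0)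
    (hd : S.card ≤ Module.finrank F M) : HypS S := by
  refine ⟨LinearMap.range L, ?_, ?_⟩
  · rintro _ ⟨m, rfl⟩
    exact ⟨h0 m, hq m⟩
  · rwa [LinearMap.finrank_range_of_inj hL]

/-- The polar form of the orthogonal sum of any `I`-indexed family of planes. -/
def polarI (I : Type*) [Fintype I] : LinearMap.BilinForm F (I → F × F) :=
  ∑ i : I,
    ((LinearMap.mul F F).compl₁₂ ((LinearMap.fst F F F).comp (LinearMap.proj i))
      ((LinearMap.snd F F F).comp (LinearMap.proj i)) +
    (LinearMap.mul F F).compl₁₂ ((LinearMap.snd F F F).comp (LinearMap.proj i))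
      ((LinearMap.fst F F F).comp (LinearMap.proj i)))

lemma polarI_apply (I : Type*) [Fintype I] (v w : I → F × F) :
    polarI I v w = ∑ i, ((v i).1 * (w i).2 + (v i).2 * (w i).1) := by
  simp [polarI]

lemma polarI_comm (I : Type*) [Fintype I] (v w : I → F × F) : polarI I v w = polarI I w v := by
  simp only [polarI_apply]
  exact Finset.sum_congr rfl fun i _ => by ring

lemma polarI_nondeg (I : Type*) [Fintype I] : (polarI (F := F) I).Nondegenerate := by
  classical
  have h : ∀ v : I → F × F, (∀ w, polarI I v w = 0) → v = 0 := by
    intro v hv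
    funext i
    have h1 := hv (Pi.single i (0, 1))
    have h2 := hv (Pi.single i (1, 0))
    rw [polarI_apply, Finset.sum_eq_single i (by intro j _ hj; simp [hj]) (by simp)] at h1 h2
    ext
    · simpa using h1
    · simpa using h2
  refine ⟨h, fun v hv => h v fun w => ?_⟩
  rw [polarI_comm]; exact hv w

lemma planeVal_add (p u v : F × F) (h2 : (2 : F) = 0) :
    planeVal p (u + v) = planeVal p u + planeVal p v + (u.1 * v.2 + u.2 * v.1) := by
  simp only [planeVal, Prod.fst_add, Prod.snd_add]
  linear_combination (p.1 * u.1 * v.1 + p.2 * u.2 * v.2) * h2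

lemma HypS_empty : HypS (∅ : Finset (F × F)) :=
  ⟨⊥, by rintro _ rfl; simp, by simp⟩

/-- If the sums over `S` and `S'` are Witt equivalent and `S'` is smaller, the sum over `S` is
isotropic. -/
lemma isotropic_of_HypS_symmDiff [DecidableEq F] {S S' : Finset (F × F)}
    (h : HypS (symmDiff S S')) (hc : S'.card < S.card) :
    ∃ v : F × F → F × F, v ≠ 0 ∧ (∀ x ∉ S, v x = 0) ∧ ∑ x ∈ S, planeVal x (v x) = 0 := by
  obtain ⟨T, hT, hd⟩ := h
  have := finiteDimensional_of_vanish _ T fun t ht => (hT t ht).1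
  let g : T →ₗ[F] ((S' \ S : Finset (F × F)) → F × F) := (resS _).comp T.subtype
  have c1 := Finset.card_inter_add_card_sdiff S S'
  have c2 := Finset.card_inter_add_card_sdiff S' S
  have c3 : (_root_.symmDiff S S').card = (S \ S').card + (S' \ S).card :=
    Finset.card_union_of_disjoint disjoint_sdiff_sdiff
  rw [Finset.inter_comm S' S] at c2
  have d4 : Module.finrank F ((S' \ S : Finset (F × F)) → F × F) = 2 * (S' \ S).card := by
    simp [Module.finrank_pi_fintype]; ring
  have d5 := LinearMap.finrank_range_add_finrank_ker g
  have d6 := Submodule.finrank_le (LinearMap.range g)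
  have hpos : 0 < Module.finrank F (LinearMap.ker g) := by omega
  have hne : ∃ z : LinearMap.ker g, z ≠ 0 := by
    by_contra! hz
    have : LinearMap.ker g = ⊥ := by
      rw [eq_bot_iff]
      intro z hz'
      exact congrArg Subtype.val (hz ⟨z, hz'⟩)
    rw [this, finrank_bot] at hpos
    exact lt_irrefl _ hpos
  obtain ⟨⟨⟨v, hv⟩, hg⟩, hne⟩ := hne
  have hv0 : ∀ x ∈ S', x ∉ S → v x = 0 := fun x hx hx' =>
    congrFun hg ⟨x, Finset.mem_sdiff.2 ⟨hx, hx'⟩⟩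
  obtain ⟨hz, he⟩ := hT v hv
  have hz' : ∀ x, x ∉ S \ S' → v x = 0 := by
    intro x hx
    by_cases h : x ∈ _root_.symmDiff S S'
    · rw [Finset.mem_symmDiff] at h
      rw [Finset.mem_sdiff] at hx
      have h' : x ∈ S' ∧ x ∉ S := by tauto
      exact hv0 x h'.1 h'.2
    · exact hz x h
  refine ⟨v, ?_, fun x hx => hz' x fun h => hx (Finset.mem_sdiff.1 h).1, ?_⟩
  · rintro rfl; exact hne rfl
  · have q0 : ∀ x : F × F, planeVal x 0 = 0 := fun x => by simp [planeVal]
    have e1 : ∑ x ∈ S \ S', planeVal x (v x) = ∑ x ∈ S, planeVal x (v x) :=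
      Finset.sum_subset Finset.sdiff_subset fun x _ hx => by rw [hz' x hx, q0]
    have e2 : ∑ x ∈ S \ S', planeVal x (v x) = ∑ x ∈ _root_.symmDiff S S', planeVal x (v x) :=
      Finset.sum_subset (fun x hx => Finset.mem_symmDiff.2 (Or.inl (Finset.mem_sdiff.1 hx)))
        fun x _ hx => by rw [hz' x hx, q0]
    rw [← e1, e2, he]

lemma rank_nullity_sub {M N : Type*} [AddCommGroup M] [Module F M] [AddCommGroup N] [Module F N]
    [FiniteDimensional F M] (k : Submodule F M) (f : k →ₗ[F] N) :
    Module.finrank F (LinearMap.range f) + Module.finrank F (LinearMap.ker f) =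
      Module.finrank F k := LinearMap.finrank_range_add_finrank_ker f

/-- The dimension count for Witt cancellation: `rδ + kδ` and `rσ + kσ` are rank plus nullity of the
two maps in the proof, and `oK = V - k` is the dimension of the orthogonal complement. -/
lemma dim_count {rδ oK k V kδ TT T T' rσ kσ i s s' d d' D : ℕ} (d1 : rδ ≤ oK) (d2 : oK = V - k)
    (d3 : k ≤ V) (d4 : V = 2 * i) (d5 : rδ + kδ = TT) (d6 : TT = T + T') (d7 : rσ + kσ = kδ)
    (d8 : kσ ≤ k) (hd : s ≤ T) (hd' : s' ≤ T') (c1 : i + d = s) (c2 : i + d' = s')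
    (c3 : D = d + d') : D ≤ rσ := by omega

variable [CharP F 2]

/-- Witt cancellation: planes occurring in two hyperbolic sums cancel out. For totally singular
subspaces `T` and `T'` of maximal dimension, the vectors `t + t'` with `t ∈ T`, `t' ∈ T'` agreeing
on the common planes span a totally singular subspace of the symmetric difference; it is large enough
because the differences on the common planes are orthogonal to the image of `T ∩ T'`. -/
lemma HypS.symmDiff [DecidableEq F] {S S' : Finset (F × F)} (h : HypS S) (h' : HypS S') :
    HypS (symmDiff S S') := by
  obtain ⟨T, hT, hd⟩ := h
  obtain ⟨T', hT', hd'⟩ := h'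
  have h2 : (2 : F) = 0 := CharTwo.two_eq_zero
  have hadd : ∀ u : F × F, u + u = 0 := fun u => by
    ext <;> simp [CharTwo.add_self_eq_zero]
  have := finiteDimensional_of_vanish S T fun t ht => (hT t ht).1
  have := finiteDimensional_of_vanish S' T' fun t ht => (hT' t ht).1
  have eq_of_sum : ∀ t t' : F × F → F × F, t + t' = 0 → t = t' := fun t t' hs => by
    funext x
    have := congrFun hs x
    simp only [Pi.add_apply, Pi.zero_apply] at this
    calc t x = t x + (t' x + t' x) := by rw [hadd]; simp
      _ = t' x := by rw [← add_assoc, this, zero_add]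
  set I := S ∩ S' with hI
  let sm : (T × T') →ₗ[F] (F × F → F × F) := T.subtype.coprod T'.subtype
  let δ : (T × T') →ₗ[F] (I → F × F) := (resS I).comp sm
  -- On pairs agreeing on `I`, the sum vanishes on `I` and has the total value `0`.
  let σ : LinearMap.ker δ →ₗ[F] (F × F → F × F) := sm.comp (LinearMap.ker δ).subtype
  let K : Submodule F (I → F × F) := (T ⊓ T').map (resS I)
  have polar0 : ∀ (R : Finset (F × F)) (P : Submodule F (F × F → F × F)),
      (∀ t ∈ P, (∀ x ∉ R, t x = 0) ∧ ∑ x ∈ R, planeVal x (t x) = 0) → ∀ t ∈ P, ∀ k ∈ P,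
      ∑ x ∈ R, ((t x).1 * (k x).2 + (t x).2 * (k x).1) = 0 := by
    intro R P hP t ht k hk
    have e := (hP _ (P.add_mem ht hk)).2
    simp only [Pi.add_apply, planeVal_add _ _ _ h2, Finset.sum_add_distrib] at e
    rw [(hP t ht).2, (hP k hk).2] at e
    simpa [Finset.sum_add_distrib] using e
  have hperp : LinearMap.range δ ≤ (polarI I).orthogonal K := by
    rintro _ ⟨⟨⟨t, ht⟩, ⟨t', ht'⟩⟩, rfl⟩
    rw [LinearMap.BilinForm.mem_orthogonal_iff]
    rintro _ ⟨k, ⟨hk, hk'⟩, rfl⟩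
    show polarI I _ _ = 0
    rw [polarI_comm, polarI_apply]
    have e1 := polar0 S T hT t ht k hk
    have e2 := polar0 S' T' hT' t' ht' k hk'
    have r1 : ∑ x ∈ I, ((t x).1 * (k x).2 + (t x).2 * (k x).1) = 0 := by
      rw [← e1]
      refine Finset.sum_subset Finset.inter_subset_left fun x hx hxI => ?_
      have : k x = 0 := (hT' k hk').1 x fun h => hxI (Finset.mem_inter.2 ⟨hx, h⟩)
      simp [this]
    have r2 : ∑ x ∈ I, ((t' x).1 * (k x).2 + (t' x).2 * (k x).1) = 0 := by
      rw [← e2]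
      refine Finset.sum_subset Finset.inter_subset_right fun x hx hxI => ?_
      have : k x = 0 := (hT k hk).1 x fun h => hxI (Finset.mem_inter.2 ⟨h, hx⟩)
      simp [this]
    have r3 := Finset.sum_coe_sort I
      (fun x => ((t x + t' x).1 * (k x).2 + (t x + t' x).2 * (k x).1))
    simp only [δ, sm, LinearMap.comp_apply, resS_apply, LinearMap.coprod_apply,
      Submodule.subtype_apply, Pi.add_apply]
    rw [r3, ← add_zero (0 : F)]
    nth_rewrite 1 [← r1]
    rw [← r2, ← Finset.sum_add_distrib]
    refine Finset.sum_congr rfl fun x _ => ?_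
    simp only [Prod.fst_add, Prod.snd_add]; ring
  have d1 := Submodule.finrank_mono hperp
  have d2 := LinearMap.BilinForm.finrank_orthogonal (polarI_nondeg (F := F) I) K
  have d3 := Submodule.finrank_le K
  have d4 : Module.finrank F (I → F × F) = 2 * I.card := by
    simp [Module.finrank_pi_fintype]; ring
  have d5 := LinearMap.finrank_range_add_finrank_ker δ
  have d6 : Module.finrank F (T × T') = Module.finrank F T + Module.finrank F T' :=
    Module.finrank_prod
  have d7 : Module.finrank F (LinearMap.range σ) + Module.finrank F (LinearMap.ker σ) =
      Module.finrank F (LinearMap.ker δ) := rank_nullity_sub (LinearMap.ker δ) σ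
  have d8 : Module.finrank F (LinearMap.ker σ) ≤ Module.finrank F K := by
    let g : LinearMap.ker σ →ₗ[F] K :=
      LinearMap.codRestrict K ((resS I).comp (T.subtype.comp ((LinearMap.fst F T T').comp
        ((LinearMap.ker δ).subtype.comp (LinearMap.ker σ).subtype)))) (by
          rintro ⟨⟨⟨⟨t, ht⟩, ⟨t', ht'⟩⟩, hδ⟩, hσ⟩
          have hs : t + t' = 0 := hσ
          have : t = t' := eq_of_sum t t' hs
          subst this
          exact ⟨t, ⟨ht, ht'⟩, rfl⟩)
    apply LinearMap.finrank_le_finrank_of_injective (f := g)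
    rintro ⟨⟨⟨⟨t, ht⟩, ⟨t', ht'⟩⟩, hδ⟩, hσ⟩ ⟨⟨⟨⟨r, hr⟩, ⟨r', hr'⟩⟩, hδr⟩, hσr⟩ h0
    have htt : t = t' := eq_of_sum t t' hσ
    have hrr : r = r' := eq_of_sum r r' hσr
    subst htt hrr
    have h0' : resS I t = resS I r := congrArg Subtype.val h0
    have ht0 : t = r := by
      funext x
      by_cases hx : x ∈ I
      · exact congrFun h0' ⟨x, hx⟩
      · rw [hI, Finset.mem_inter, not_and_or] at hx
        rcases hx with hx | hx
        · rw [(hT t ht).1 x hx, (hT r hr).1 x hx]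
        · rw [(hT' t ht').1 x hx, (hT' r hr').1 x hx]
    subst ht0
    rfl
  refine ⟨LinearMap.range σ, ?_, ?_⟩
  · rintro _ ⟨⟨⟨⟨t, ht⟩, ⟨t', ht'⟩⟩, hδ⟩, rfl⟩
    have hδ' : ∀ x ∈ I, t x + t' x = 0 := fun x hx => congrFun hδ ⟨x, hx⟩
    have hσ : ∀ x, σ ⟨⟨⟨t, ht⟩, ⟨t', ht'⟩⟩, hδ⟩ x = t x + t' x := fun x => rfl
    obtain ⟨z, e⟩ := hT t ht
    obtain ⟨z', e'⟩ := hT' t' ht'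
    constructor
    · intro x hx
      rw [hσ]
      rw [Finset.mem_symmDiff] at hx
      by_cases h : x ∈ S <;> by_cases h' : x ∈ S'
      · exact hδ' x (Finset.mem_inter.2 ⟨h, h'⟩)
      · tauto
      · tauto
      · rw [z x h, z' x h', add_zero]
    · have hdisj : Disjoint (S \ S') (S' \ S) := disjoint_sdiff_sdiff
      have hu : _root_.symmDiff S S' = (S \ S') ∪ (S' \ S) := rfl
      rw [hu, Finset.sum_union hdisj]
      have s1 : ∑ x ∈ S \ S', planeVal x (σ ⟨⟨⟨t, ht⟩, ⟨t', ht'⟩⟩, hδ⟩ x)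
          = ∑ x ∈ S \ S', planeVal x (t x) :=
        Finset.sum_congr rfl fun x hx => by
          rw [hσ, z' x (Finset.mem_sdiff.1 hx).2, add_zero]
      have s2 : ∑ x ∈ S' \ S, planeVal x (σ ⟨⟨⟨t, ht⟩, ⟨t', ht'⟩⟩, hδ⟩ x)
          = ∑ x ∈ S' \ S, planeVal x (t' x) :=
        Finset.sum_congr rfl fun x hx => by
          rw [hσ, z x (Finset.mem_sdiff.1 hx).2, zero_add]
      have s3 : ∑ x ∈ S ∩ S', planeVal x (t x) = ∑ x ∈ S' ∩ S, planeVal x (t' x) := by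
        rw [Finset.inter_comm S' S]
        refine Finset.sum_congr rfl fun x hx => ?_
        have := hδ' x hx
        have htt : t x = t' x := by
          calc t x = t x + (t' x + t' x) := by rw [hadd]; simp
            _ = t' x := by rw [← add_assoc, this, zero_add]
        rw [htt]
      have s4 := Finset.sum_inter_add_sum_sdiff S S' (fun x => planeVal x (t x))
      have s5 := Finset.sum_inter_add_sum_sdiff S' S (fun x => planeVal x (t' x))
      rw [s1, s2]
      rw [e] at s4
      rw [e', ← s3] at s5
      linear_combination s4 + s5 - (∑ x ∈ S ∩ S', planeVal x (t x)) * h2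
  · have c1 := Finset.card_inter_add_card_sdiff S S'
    have c2 := Finset.card_inter_add_card_sdiff S' S
    have c3 : (_root_.symmDiff S S').card = (S \ S').card + (S' \ S).card :=
      Finset.card_union_of_disjoint disjoint_sdiff_sdiff
    rw [Finset.inter_comm S' S] at c2
    rw [← hI] at c1 c2
    exact dim_count d1 d2 d3 d4 d5 d6 d7 d8 hd hd' c1 c2 c3


end

/-! ### The Witt group -/

lemma support_sum_single {X : Type*} (S : Finset X) :
    (∑ p ∈ S, Finsupp.single p (1 : ZMod 2)).support = S := by
  classical
  ext x
  rw [Finsupp.mem_support_iff, Finsupp.finsetSum_apply]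
  by_cases hx : x ∈ S
  · rw [Finset.sum_eq_single x (fun y _ hy => by simp [hy])
      (fun h => (h hx).elim)]
    simp [hx]
  · rw [Finset.sum_eq_zero (fun y hy => by
      rw [Finsupp.single_apply, if_neg]; rintro rfl; exact hx hy)]
    simp [hx]

section
variable (F : Type*) [Field F] [CharP F 2]

/-- Formal sums of planes, with coefficients modulo `2`, whose support is hyperbolic. -/
def hypSubgroup : AddSubgroup ((F × F) →₀ ZMod 2) where
  carrier := {f | HypS f.support}
  zero_mem' := by simpa using HypS_empty
  neg_mem' := by intro f hf; simpa using hf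
  add_mem' := by
    classical
    intro f g hf hg
    have : (f + g).support = symmDiff f.support g.support := by
      ext x
      simp only [Finset.mem_symmDiff, Finsupp.mem_support_iff, Finsupp.add_apply]
      generalize f x = a
      generalize g x = b
      revert a b
      decide
    show HypS (f + g).support
    rw [this]
    exact HypS.symmDiff hf hg

/-- The Witt group of nonsingular quadratic forms over `F`, presented as formal sums of planes
modulo hyperbolic ones; every form is its own negative, so the coefficients may be taken in
`ZMod 2`. -/
def Witt : Type _ := ((F × F) →₀ ZMod 2) ⧸ hypSubgroup F

instance : AddCommGroup (Witt F) := inferInstanceAs (AddCommGroup (_ ⧸ hypSubgroup F))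

variable {F}

/-- The Witt class of the plane `[a,b]`. -/
def w (a b : F) : Witt F := (QuotientAddGroup.mk (Finsupp.single (a, b) 1) : _ ⧸ hypSubgroup F)

/-- The Witt class of a formal sum of planes. -/
def wmk : ((F × F) →₀ ZMod 2) →+ Witt F := QuotientAddGroup.mk' (hypSubgroup F)

lemma w_eq (p : F × F) : w p.1 p.2 = wmk (Finsupp.single p 1) := rfl

lemma wmk_eq_zero (f : (F × F) →₀ ZMod 2) : wmk f = 0 ↔ HypS f.support :=
  QuotientAddGroup.eq_zero_iff f

lemma W_add_self (x : Witt F) : x + x = 0 := by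
  obtain ⟨f, rfl⟩ := QuotientAddGroup.mk_surjective (s := hypSubgroup F) x
  show wmk f + wmk f = 0
  rw [← map_add]
  have : f + f = 0 := by
    ext x
    simp only [Finsupp.add_apply, Finsupp.coe_zero, Pi.zero_apply]
    generalize f x = a
    revert a; decide
  rw [this, map_zero]

lemma W_eq_of_add {x y : Witt F} (h : x + y = 0) : x = y := by
  have := W_add_self y
  rw [← this] at h
  exact add_right_cancel h

lemma W_add_of_eq {x y : Witt F} (h : x = y) : x + y = 0 := by rw [h, W_add_self]

lemma wmk_sum (S : Finset (F × F)) :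
    wmk (∑ p ∈ S, Finsupp.single p 1) = ∑ p ∈ S, w p.1 p.2 := by
  rw [map_sum]; rfl

lemma sum_w_of_HypS (S : Finset (F × F)) (h : HypS S) : ∑ p ∈ S, w p.1 p.2 = 0 := by
  rw [← wmk_sum, wmk_eq_zero, support_sum_single]; exact h

/-- Witt equivalent sums of different length: the longer one is isotropic. -/
lemma isotropic_of_sum_eq {m n : ℕ} (p : Fin m → F × F) (p' : Fin n → F × F) (hmn : n < m)
    (h : ∑ i, w (p i).1 (p i).2 = ∑ j, w (p' j).1 (p' j).2) :
    ∃ v : Fin m → F × F, v ≠ 0 ∧ ∑ i, planeVal (p i) (v i) = 0 := by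
  classical
  have h2 : (2 : F) = 0 := CharTwo.two_eq_zero
  by_cases hp : Function.Injective p
  · set f : (F × F) →₀ ZMod 2 := ∑ j, Finsupp.single (p' j) 1
    have hcard : f.support.card < (Finset.univ.image p).card := by
      rw [Finset.card_image_of_injective _ hp, Finset.card_univ, Fintype.card_fin]
      refine lt_of_le_of_lt ?_ hmn
      have : f.support ⊆ Finset.univ.image p' := by
        intro x hx
        rw [Finsupp.mem_support_iff, Finsupp.finsetSum_apply] at hx
        obtain ⟨j, -, hj⟩ := Finset.exists_ne_zero_of_sum_ne_zero hx
        rw [Finsupp.single_apply] at hj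
        have : p' j = x := by
          by_contra hne
          exact hj (if_neg hne)
        exact Finset.mem_image.2 ⟨j, Finset.mem_univ _, this⟩
      refine (Finset.card_le_card this).trans (Finset.card_image_le.trans ?_)
      simp
    have hyp : HypS (symmDiff (Finset.univ.image p) f.support) := by
      have e : wmk (∑ x ∈ Finset.univ.image p, Finsupp.single x 1 + f) = 0 := by
        rw [map_add, wmk_sum, Finset.sum_image (fun a _ b _ h => hp h)]
        apply W_add_of_eq
        rw [h, map_sum]; rfl
      rw [wmk_eq_zero] at e
      convert e using 1
      conv_lhs => rw [← support_sum_single (Finset.univ.image p)]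
      ext x
      simp only [Finset.mem_symmDiff, Finsupp.mem_support_iff, Finsupp.add_apply]
      generalize (∑ x ∈ Finset.univ.image p, Finsupp.single x (1 : ZMod 2)) x = a
      generalize f x = b
      revert a b
      decide
    obtain ⟨v, hv, h0, hs⟩ := isotropic_of_HypS_symmDiff hyp hcard
    refine ⟨v ∘ p, ?_, ?_⟩
    · intro hz
      apply hv
      funext x
      by_cases hx : x ∈ Finset.univ.image p
      · obtain ⟨i, -, rfl⟩ := Finset.mem_image.1 hx
        exact congrFun hz i
      · exact h0 x hx
    · rwa [Finset.sum_image (fun a _ b _ h => hp h)] at hs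
  · -- A repeated plane contributes `u ⊥ u` with `u + u` isotropic.
    simp only [Function.Injective, not_forall] at hp
    obtain ⟨i, j, hij, hne⟩ := hp
    refine ⟨fun k => if k = i ∨ k = j then (1, 0) else 0, ?_, ?_⟩
    · intro h; simpa using congrFun h i
    · rw [← Finset.sum_subset (Finset.subset_univ {i, j}), Finset.sum_pair hne]
      · simp only [true_or, or_true, if_true, hij, planeVal]
        linear_combination ((p j).1) * h2
      · intro k _ hk
        simp only [Finset.mem_insert, Finset.mem_singleton] at hk
        simp [hk, planeVal]

lemma w_zero_of_isotropic (p u : F × F) (hu : u ≠ 0) (h : planeVal p u = 0) : w p.1 p.2 = 0 := by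
  classical
  rw [← Finset.sum_singleton (fun p : F × F => w p.1 p.2) p]
  apply sum_w_of_HypS
  refine HypS_of_injective (M := F) {p}
    ((LinearMap.single F (fun _ : F × F => F × F) p).comp (LinearMap.toSpanSingleton F (F × F) u))
    ?_ ?_ ?_ (by simp)
  · intro a b hab
    have := congrFun hab p
    simp only [LinearMap.comp_apply, LinearMap.toSpanSingleton_apply, LinearMap.single_apply,
      Pi.single_eq_same] at this
    exact smul_left_injective F hu this
  · intro m x hx
    rw [Finset.mem_singleton] at hx
    simp [hx]
  · intro m
    rw [Finset.sum_singleton]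
    simp only [LinearMap.comp_apply, LinearMap.toSpanSingleton_apply, LinearMap.single_apply,
      Pi.single_eq_same]
    simp only [planeVal, Prod.smul_fst, Prod.smul_snd, smul_eq_mul] at h ⊢
    linear_combination m ^ 2 * h

/-- Isometric planes have the same Witt class; the graph of the isometry is totally singular in
their sum. -/
lemma w_eq_of_isometry (p p' : F × F) (L : F × F →ₗ[F] F × F)
    (h : ∀ u, planeVal p u = planeVal p' (L u)) : w p.1 p.2 = w p'.1 p'.2 := by
  classical
  by_cases hne : p = p'
  · rw [hne]
  have h2 : (2 : F) = 0 := CharTwo.two_eq_zero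
  apply W_eq_of_add
  rw [← Finset.sum_pair (f := fun p : F × F => w p.1 p.2) hne]
  apply sum_w_of_HypS
  refine HypS_of_injective (M := F × F) {p, p'}
    (LinearMap.single F (fun _ : F × F => F × F) p +
      (LinearMap.single F (fun _ : F × F => F × F) p').comp L) ?_ ?_ ?_ ?_
  · intro a b hab
    have := congrFun hab p
    simpa [hne] using this
  · intro m x hx
    simp only [Finset.mem_insert, Finset.mem_singleton, not_or] at hx
    simp [hx]
  · intro m
    rw [Finset.sum_pair hne]
    simp only [LinearMap.add_apply, LinearMap.comp_apply, LinearMap.single_apply, Pi.add_apply,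
      Pi.single_eq_same, ne_eq, hne, not_false_eq_true, Pi.single_eq_of_ne, Ne.symm hne, add_zero,
      zero_add, ← h]
    linear_combination planeVal p m * h2
  · rw [Finset.card_pair hne]; simp

lemma w_zero_left (b : F) : w 0 b = 0 :=
  w_zero_of_isotropic (0, b) (1, 0) (by simp) (by simp [planeVal])

lemma w_swap (a b : F) : w a b = w b a :=
  w_eq_of_isometry (a, b) (b, a) ((LinearMap.snd F F F).prod (LinearMap.fst F F F)) fun u => by
    show a * u.1 ^ 2 + u.1 * u.2 + b * u.2 ^ 2 = b * u.2 ^ 2 + u.2 * u.1 + a * u.1 ^ 2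
    ring

lemma w_zero_right (a : F) : w a 0 = 0 := by rw [w_swap, w_zero_left]

lemma w_sq (a b x : F) : w (a * x ^ 2) b = w a (b * x ^ 2) := by
  by_cases hx : x = 0
  · simp [hx, w_zero_left, w_zero_right]
  refine w_eq_of_isometry (a * x ^ 2, b) (a, b * x ^ 2)
    ((x • LinearMap.fst F F F).prod (x⁻¹ • LinearMap.snd F F F)) fun u => ?_
  show a * x ^ 2 * u.1 ^ 2 + u.1 * u.2 + b * u.2 ^ 2 =
    a * (x * u.1) ^ 2 + x * u.1 * (x⁻¹ * u.2) + b * x ^ 2 * (x⁻¹ * u.2) ^ 2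
  field_simp

lemma w_add (a a' b : F) : w a b + w a' b = w (a + a') b := by
  classical
  by_cases ha : a = 0
  · simp [ha, w_zero_left]
  by_cases ha' : a' = 0
  · simp [ha', w_zero_left]
  have h2 : (2 : F) = 0 := CharTwo.two_eq_zero
  by_cases haa : a = a'
  · rw [haa, W_add_self, CharTwo.add_self_eq_zero, w_zero_left]
  have h12 : ((a, b) : F × F) ≠ (a', b) := by simp [haa]
  have h13 : ((a, b) : F × F) ≠ (a + a', b) := by simp [ha']
  have h23 : ((a', b) : F × F) ≠ (a + a', b) := by simp [ha]
  apply W_eq_of_add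
  have e : w a b + w a' b + w (a + a') b =
      ∑ p ∈ {(a, b), (a', b), (a + a', b)}, w p.1 p.2 := by
    rw [Finset.sum_insert (by simp [haa, ha']), Finset.sum_pair h23, add_assoc]
  rw [e]
  apply sum_w_of_HypS
  -- The subspace of triples with equal first coordinates and second coordinates of sum `0`.
  refine HypS_of_injective (M := F × F × F) _
    ((LinearMap.single F (fun _ : F × F => F × F) (a, b)).comp
      ((LinearMap.fst F F (F × F)).prod ((LinearMap.fst F F F).comp (LinearMap.snd F F (F × F)))) +
    (LinearMap.single F (fun _ : F × F => F × F) (a', b)).comp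
      ((LinearMap.fst F F (F × F)).prod ((LinearMap.snd F F F).comp (LinearMap.snd F F (F × F)))) +
    (LinearMap.single F (fun _ : F × F => F × F) (a + a', b)).comp
      ((LinearMap.fst F F (F × F)).prod
        ((LinearMap.fst F F F + LinearMap.snd F F F).comp (LinearMap.snd F F (F × F)))))
    ?_ ?_ ?_ ?_
  · rintro ⟨s, y, y'⟩ ⟨t, z, z'⟩ hab
    have e1 := congrFun hab (a, b)
    have e2 := congrFun hab (a', b)
    simp [haa, ha', ha, Ne.symm haa] at e1 e2
    simp [e1, e2]
  · intro m x hx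
    simp only [Finset.mem_insert, Finset.mem_singleton, not_or] at hx
    simp [hx]
  · rintro ⟨s, y, y'⟩
    rw [Finset.sum_insert (by simp [haa, ha']), Finset.sum_pair h23]
    simp [haa, ha', ha, Ne.symm haa, planeVal]
    linear_combination (a * s ^ 2 + s * y + b * y ^ 2 + a' * s ^ 2 + s * y' + b * y' ^ 2 +
      b * y * y') * h2
  · rw [Finset.card_insert_of_notMem (by simp [haa, ha']), Finset.card_pair h23]; simp

lemma w_add_right (a b b' : F) : w a b + w a b' = w a (b + b') := by
  rw [w_swap a b, w_swap a b', w_swap a (b + b'), w_add]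

/-- `[a,ab² + b]` is hyperbolic: it vanishes at `(b,1)`. -/
lemma w_frob (a b : F) : w a (a * b ^ 2) = w a b := by
  apply W_eq_of_add
  rw [w_add_right]
  have h2 : (2 : F) = 0 := CharTwo.two_eq_zero
  by_cases hb : b = 0
  · simp [hb, w_zero_right]
  exact w_zero_of_isotropic (a, a * b ^ 2 + b) (b, 1) (by simp) (by
    simp only [planeVal]; linear_combination (a * b ^ 2 + b) * h2)

end

/-! ### Norm forms of quadratic étale algebras -/

section
variable {F : Type*} [Field F] [CharP F 2]

instance : Module (ZMod 2) (Witt F) :=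
  AddCommGroup.zmodModule (n := 2) fun x => by rw [two_nsmul, W_add_self]

/-- The Witt class of `x·[1,α]`, that is, of `x` times the norm form of `[α,·)`; it is `0` for
`x = 0`. -/
def sy (α x : F) : Witt F := w x (α / x)

/-- The norm form `p² + pr + αr²` of the quadratic étale algebra `F[℘⁻¹(α)]`. -/
def nm (α p r : F) : F := p ^ 2 + p * r + α * r ^ 2

lemma nm_zero (α : F) : nm α 0 0 = 0 := by simp [nm]

lemma nm_one (α : F) : nm α 1 0 = 1 := by simp [nm]

lemma nm_sq (α g : F) : nm α g 0 = g ^ 2 := by simp [nm]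

lemma nm_eq_zero {α : F} (hα : ∀ t, α ≠ t ^ 2 + t) {p r : F} (h : nm α p r = 0) :
    p = 0 ∧ r = 0 := by
  unfold nm at h
  by_cases hr : r = 0
  · subst hr
    simpa using h
  · exact (hα (p / r) (by grind)).elim

lemma w_eq_zero {a b t : F} (h : a * b = t ^ 2 + t) : w a b = 0 := by
  by_cases ha : a = 0
  · rw [ha, w_zero_left]
  · refine w_zero_of_isotropic (a, b) (t / a, 1) (by simp) ?_
    simp only [planeVal]
    grind

lemma sy_arg_zero (α : F) : sy α 0 = 0 := w_zero_left _

lemma sy_zero (x : F) : sy 0 x = 0 := by rw [sy, zero_div, w_zero_right]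

lemma sy_add (α β x : F) : sy α x + sy β x = sy (α + β) x := by
  rw [sy, sy, sy, w_add_right, add_div]

lemma w_eq_sy {a : F} (ha : a ≠ 0) (b : F) : w a b = sy (a * b) a := by
  rw [sy, mul_div_cancel_left₀ b ha]

/-- The class `sy α x` depends on `α` only modulo `℘(F)`; see also `sy_congr`. -/
lemma sy_eq_zero {α t : F} (h : α = t ^ 2 + t) (x : F) : sy α x = 0 := by
  by_cases hx : x = 0
  · rw [hx, sy_arg_zero]
  · exact w_eq_zero (t := t) (by rw [mul_div_cancel₀ _ hx, h])

lemma sy_congr {α β t : F} (h : α = β + (t ^ 2 + t)) (x : F) : sy α x = sy β x := by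
  rw [h, ← sy_add, sy_eq_zero (α := t ^ 2 + t) rfl, add_zero]

lemma sy_sq (α x : F) {y : F} (hy : y ≠ 0) : sy α (x * y ^ 2) = sy α x := by
  rw [sy, sy, w_sq]
  congr 1
  by_cases hx : x = 0
  · simp [hx]
  · field_simp

lemma sy_inv (α x : F) : sy α x = w x⁻¹ (α * x) := by
  by_cases hx : x = 0
  · simp [hx, sy_arg_zero, w_zero_left]
  · rw [sy, show x = x⁻¹ * x ^ 2 by field_simp, w_sq]
    congr 1 <;> field_simp

/-- `⟨X,Y⟩ = ⟨X+Y, XY(X+Y)⟩` as multiples of `[1,α]`. -/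
lemma sy_sum (α X Y : F) : sy α X + sy α Y = sy α (X + Y) + sy α (X * Y * (X + Y)) := by
  by_cases hX : X = 0
  · simp [hX, sy_arg_zero]
  by_cases hY : Y = 0
  · simp [hY, sy_arg_zero]
  by_cases hZ : X + Y = 0
  · have : X = Y := CharTwo.add_eq_zero.1 hZ
    rw [hZ, mul_zero, sy_arg_zero, this, W_add_self, add_zero]
  have e1 := w_add_right X⁻¹ (α * X) (α * Y)
  have e2 := w_add X⁻¹ Y⁻¹ (α * Y)
  have e3 := w_add X⁻¹ (X + Y)⁻¹ (α * (X + Y))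
  have e4 := w_sq (X * Y * (X + Y))⁻¹ (α * Y) (X + Y)
  have e5 := w_sq (X * Y * (X + Y))⁻¹ (α * (X + Y)) Y
  have e6 := w_add_right (X * Y * (X + Y))⁻¹ (α * Y * (X + Y) ^ 2) (α * (X + Y) * Y ^ 2)
  rw [show X⁻¹ + Y⁻¹ = (X * Y * (X + Y))⁻¹ * (X + Y) ^ 2 by field_simp; ring] at e2
  rw [show X⁻¹ + (X + Y)⁻¹ = (X * Y * (X + Y))⁻¹ * Y ^ 2 by field_simp; grind] at e3
  rw [show α * Y * (X + Y) ^ 2 + α * (X + Y) * Y ^ 2 = α * (X * Y * (X + Y)) by grind] at e6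
  rw [show α * X + α * Y = α * (X + Y) by ring] at e1
  rw [sy_inv, sy_inv, sy_inv, sy_inv]
  linear_combination (norm := (match_scalars <;> decide))
    (1 : ZMod 2) • (e1 + e2 + e3 + e4 + e5 + e6)

/-- Change of basis in a plane: any vector with nonzero first coordinate can be the first basis
vector. -/
lemma w_chg (a b y : F) {x : F} (hx : x ≠ 0) :
    w (a * x ^ 2 + x * y + b * y ^ 2) (b / x ^ 2) = w a b := by
  have e1 := w_sq (a + (y / x + b * (y / x) ^ 2)) (b / x ^ 2) x
  rw [show (a + (y / x + b * (y / x) ^ 2)) * x ^ 2 = a * x ^ 2 + x * y + b * y ^ 2 by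
    field_simp; ring, show b / x ^ 2 * x ^ 2 = b by field_simp] at e1
  have e2 := w_add a (y / x + b * (y / x) ^ 2) b
  have e3 := w_add (y / x) (b * (y / x) ^ 2) b
  have e4 := w_frob b (y / x)
  rw [w_swap b, w_swap b] at e4
  linear_combination (norm := (match_scalars <;> decide)) (1 : ZMod 2) • (e1 + e2 + e3 + e4)

/-- Nonzero norms are similarity factors of the norm form. -/
lemma sy_norm (α x p r : F) (hn : nm α p r ≠ 0) : sy α (x * nm α p r) = sy α x := by
  by_cases hx : x = 0
  · simp [hx]
  unfold nm at *
  by_cases hp : p = 0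
  · subst hp
    have hr : r ≠ 0 := by rintro rfl; simp at hn
    have hα : α ≠ 0 := by rintro rfl; simp at hn
    rw [show x * (0 ^ 2 + 0 * r + α * r ^ 2) = x * α * r ^ 2 by ring, sy_sq _ _ hr, sy_inv α x, sy,
      w_swap]
    congr 1 <;> field_simp
  · have e1 := w_chg x (α / x) (r * x) hp
    rw [show x * p ^ 2 + p * (r * x) + α / x * (r * x) ^ 2 = x * (p ^ 2 + p * r + α * r ^ 2) by
      field_simp] at e1
    rw [sy, sy, ← e1]
    apply W_eq_of_add
    rw [w_add_right]
    apply w_eq_zero (t := α * r / p)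
    generalize hn' : p ^ 2 + p * r + α * r ^ 2 = n at *
    field_simp
    grind

/-- `⟨⟨B, α]] = ⟨⟨B, α + B]]`, scaled by `x`. -/
lemma sy_shift (α : F) {x B : F} (hx : x ≠ 0) (hB : B ≠ 0) :
    sy α x + sy α (x * B) = sy (α + B) x + sy (α + B) (x * B) := by
  rw [← sy_add, ← sy_add]
  have : sy B x = sy B (x * B) := by
    rw [sy_inv, sy, w_swap]
    congr 1 <;> field_simp
  linear_combination (norm := (match_scalars <;> decide)) (1 : ZMod 2) • this

/-- Adding to `α` a value of `b·[1,α]` changes the first slot of `[α,b)` without changing the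
algebra. -/
lemma sy_slot (α p r : F) {b : F} (hb : b ≠ 0) : ∃ b', b' ≠ 0 ∧ ∀ x, x ≠ 0 →
    sy α x + sy α (x * b) = sy (α + b * nm α p r) x + sy (α + b * nm α p r) (x * b') := by
  by_cases hn : nm α p r = 0
  · exact ⟨b, hb, fun x _ => by rw [hn, mul_zero, add_zero]⟩
  · refine ⟨b * nm α p r, mul_ne_zero hb hn, fun x hx => ?_⟩
    rw [← sy_shift α hx (mul_ne_zero hb hn), ← mul_assoc, sy_norm _ _ _ _ hn]

/-! ### Three-fold Pfister forms -/

/-- `f + c·f` for a class `f` regarded as a function of its scaling factor. -/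
def dbl (f : F → Witt F) (c x : F) : Witt F := f x + f (x * c)

/-- The Witt class of `x` times the three-fold Pfister form `⟨⟨c₂, c₁, α]]`. -/
def Pf (α c₁ c₂ : F) : F → Witt F := dbl (dbl (sy α) c₁) c₂

/-- Formal properties of `x ↦ x·π` for a Pfister form `π`; the elements of `D` are values
of `π`, and the last property says that nonzero values are similarity factors. -/
structure Rd (f : F → Witt F) (D : Set F) : Prop where
  sq : ∀ x y, y ≠ 0 → f (x * y ^ 2) = f x
  sum : ∀ X Y, f X + f Y = f (X + Y) + f (X * Y * (X + Y))
  sim : ∀ M ∈ D, M ≠ 0 → ∀ x, f (x * M) = f x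

lemma Rd_sy (α : F) : Rd (sy α) {M | ∃ p r, M = nm α p r} where
  sq x _ hy := sy_sq α x hy
  sum := sy_sum α
  sim := by
    rintro _ ⟨p, r, rfl⟩ h x
    exact sy_norm _ _ _ _ h

/-- Roundness passes from `f` to its double, as in the classical induction for Pfister forms. -/
lemma Rd.dbl {f : F → Witt F} {D : Set F} (h : Rd f D) {c : F} (hc : c ≠ 0) :
    Rd (dbl f c) {M | ∃ M₀ ∈ D, ∃ M₁ ∈ D, M = M₀ + c * M₁} where
  sq x y hy := by
    simp only [_root_.dbl]
    rw [h.sq x y hy, mul_right_comm, h.sq _ y hy]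
  sum X Y := by
    simp only [_root_.dbl]
    have e1 := h.sum X Y
    have e2 := h.sum (X * c) (Y * c)
    rw [show X * c * (Y * c) * (X * c + Y * c) = X * Y * (X + Y) * c * c ^ 2 by ring,
      h.sq _ _ hc, show X * c + Y * c = (X + Y) * c by ring] at e2
    linear_combination (norm := (match_scalars <;> decide)) (1 : ZMod 2) • (e1 + e2)
  sim := by
    rintro _ ⟨M₀, h₀, M₁, h₁, rfl⟩ hv x
    simp only [_root_.dbl]
    by_cases hx : x = 0
    · simp [hx]
    by_cases z₀ : M₀ = 0
    · subst z₀
      have z₁ : M₁ ≠ 0 := by rintro rfl; simp at hv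
      have e1 := h.sim M₁ h₁ z₁ (x * c)
      have e2 := h.sim M₁ h₁ z₁ x
      rw [show x * (0 + c * M₁) * c = x * M₁ * c ^ 2 by ring, h.sq _ _ hc,
        show x * (0 + c * M₁) = x * c * M₁ by ring, e1, e2, add_comm]
    by_cases z₁ : M₁ = 0
    · subst z₁
      have e1 := h.sim M₀ h₀ z₀ (x * c)
      have e2 := h.sim M₀ h₀ z₀ x
      rw [show x * (M₀ + c * 0) * c = x * c * M₀ by ring,
        show x * (M₀ + c * 0) = x * M₀ by ring, e1, e2]
    have e1 := h.sim M₀ h₀ z₀ x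
    have e2 := h.sim M₁ h₁ z₁ (x * c)
    have e3 := h.sum (x * M₀) (x * c * M₁)
    rw [show x * M₀ * (x * c * M₁) * (x * M₀ + x * c * M₁) =
      x * (M₀ + c * M₁) * c * M₀ * M₁ * x ^ 2 by ring, h.sq _ _ hx,
      h.sim M₁ h₁ z₁ (_ * M₀), h.sim M₀ h₀ z₀ (_ * c),
      show x * M₀ + x * c * M₁ = x * (M₀ + c * M₁) by ring] at e3
    rw [← e3, e1, e2]

/-- If the doubled form vanishes at a vector with nonzero components, the two halves are similar,
hence cancel. -/
lemma Rd.dbl_eq_zero {f : F → Witt F} {D : Set F} (h : Rd f D) {c M₀ M₁ : F}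
    (h₀ : M₀ ∈ D) (h₁ : M₁ ∈ D) (e : M₀ = c * M₁) (hne : M₀ ≠ 0) (x : F) :
    _root_.dbl f c x = 0 := by
  have hM₁ : M₁ ≠ 0 := by rintro rfl; simp [e] at hne
  rw [_root_.dbl, ← h.sim M₀ h₀ hne x, ← h.sim M₁ h₁ hM₁ (x * c), e, mul_assoc]
  exact W_add_self _

lemma dbl_zero {f : F → Witt F} (h : ∀ x, f x = 0) (c x : F) : dbl f c x = 0 := by
  rw [dbl, h, h, add_zero]

lemma Pf_of_wp {α t : F} (h : α = t ^ 2 + t) (c₁ c₂ x : F) : Pf α c₁ c₂ x = 0 :=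
  dbl_zero (dbl_zero (sy_eq_zero h) c₁) c₂ x

lemma Pf_expand (α c₁ c₂ x : F) : Pf α c₁ c₂ x =
    sy α x + sy α (x * c₁) + (sy α (x * c₂) + sy α (x * c₂ * c₁)) := rfl

lemma Pf_comm (α c₁ c₂ x : F) : Pf α c₁ c₂ x = Pf α c₂ c₁ x := by
  rw [Pf_expand, Pf_expand, mul_right_comm x c₂ c₁]
  abel

/-- Membership in the value set produced by `Rd.dbl` at the second step. -/
lemma mem_D1 (α c₁ p₀ r₀ p₁ r₁ : F) : nm α p₀ r₀ + c₁ * nm α p₁ r₁ ∈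
    {M | ∃ M₀ ∈ {M | ∃ p r, M = nm α p r}, ∃ M₁ ∈ {M | ∃ p r, M = nm α p r},
      M = M₀ + c₁ * M₁} := ⟨_, ⟨_, _, rfl⟩, _, ⟨_, _, rfl⟩, rfl⟩

/-- Pfister forms are round: nonzero values are similarity factors. -/
lemma Pf_round {α c₁ c₂ : F} (h₁ : c₁ ≠ 0) (h₂ : c₂ ≠ 0) (p₀ r₀ p₁ r₁ p₂ r₂ p₃ r₃ v x : F)
    (hv : v = nm α p₀ r₀ + c₁ * nm α p₁ r₁ + c₂ * (nm α p₂ r₂ + c₁ * nm α p₃ r₃)) (hv0 : v ≠ 0) :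
    Pf α c₁ c₂ (x * v) = Pf α c₁ c₂ x :=
  (((Rd_sy α).dbl h₁).dbl h₂).sim v
    ⟨_, mem_D1 α c₁ p₀ r₀ p₁ r₁, _, mem_D1 α c₁ p₂ r₂ p₃ r₃, hv⟩ hv0 x

/-- Isotropic Pfister forms are hyperbolic. -/
lemma Pf_eq_zero {α c₁ c₂ : F} (hα : ∀ t, α ≠ t ^ 2 + t) (h₁ : c₁ ≠ 0) (h₂ : c₂ ≠ 0)
    (p₀ r₀ p₁ r₁ p₂ r₂ p₃ r₃ x : F)
    (hne : ¬ (p₀ = 0 ∧ r₀ = 0 ∧ p₁ = 0 ∧ r₁ = 0 ∧ p₂ = 0 ∧ r₂ = 0 ∧ p₃ = 0 ∧ r₃ = 0))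
    (h : nm α p₀ r₀ + c₁ * nm α p₁ r₁ + c₂ * (nm α p₂ r₂ + c₁ * nm α p₃ r₃) = 0) :
    Pf α c₁ c₂ x = 0 := by
  have key : ∀ p r p' r', ¬ (p = 0 ∧ r = 0 ∧ p' = 0 ∧ r' = 0) →
      nm α p r + c₁ * nm α p' r' = 0 → Pf α c₁ c₂ x = 0 := by
    intro p r p' r' hn e
    apply dbl_zero
    have e' : nm α p r = c₁ * nm α p' r' := CharTwo.add_eq_zero.1 e
    refine (Rd_sy α).dbl_eq_zero ⟨p, r, rfl⟩ ⟨p', r', rfl⟩ e' fun h0 => hn ?_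
    have h0' : nm α p' r' = 0 := by
      rw [h0] at e'
      exact (mul_eq_zero.1 e'.symm).resolve_left h₁
    have a := nm_eq_zero hα h0
    have b := nm_eq_zero hα h0'
    exact ⟨a.1, a.2, b.1, b.2⟩
  by_cases hM : nm α p₀ r₀ + c₁ * nm α p₁ r₁ = 0
  · have hM' : nm α p₂ r₂ + c₁ * nm α p₃ r₃ = 0 := by
      rw [hM, zero_add] at h
      exact (mul_eq_zero.1 h).resolve_left h₂
    by_cases h0 : p₀ = 0 ∧ r₀ = 0 ∧ p₁ = 0 ∧ r₁ = 0
    · exact key _ _ _ _ (fun h' => hne (by tauto)) hM'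
    · exact key _ _ _ _ h0 hM
  · exact ((Rd_sy α).dbl h₁).dbl_eq_zero (mem_D1 α c₁ p₀ r₀ p₁ r₁) (mem_D1 α c₁ p₂ r₂ p₃ r₃)
      (CharTwo.add_eq_zero.1 h) hM x

end

/-! ### Consequences of linkage -/

section
variable {F : Type*} [Field F] [CharP F 2]

/-- Every Albert form over `F` is isotropic, in coordinates. -/
def Linked (F : Type*) [Field F] : Prop :=
  ∀ a₀ b₀ a₁ b₁ a₂ b₂ t : F, a₀ * b₀ + a₁ * b₁ + a₂ * b₂ = t ^ 2 + t →
    ∃ x₀ y₀ x₁ y₁ x₂ y₂ : F,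
      ¬ (x₀ = 0 ∧ y₀ = 0 ∧ x₁ = 0 ∧ y₁ = 0 ∧ x₂ = 0 ∧ y₂ = 0) ∧
      (a₀ * x₀ ^ 2 + x₀ * y₀ + b₀ * y₀ ^ 2) + (a₁ * x₁ ^ 2 + x₁ * y₁ + b₁ * y₁ ^ 2) +
        (a₂ * x₂ ^ 2 + x₂ * y₂ + b₂ * y₂ ^ 2) = 0

/-- Two planes with trivial total Arf invariant form a multiple of a two-fold Pfister form. -/
lemma red_two (a b a' b' t : F) (h : a * b + a' * b' = t ^ 2 + t) :
    ∃ α g g' : F, g ≠ 0 ∧ g' ≠ 0 ∧ w a b + w a' b' = sy α g + sy α g' := by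
  by_cases ha : a = 0
  · subst ha
    refine ⟨0, 1, 1, one_ne_zero, one_ne_zero, ?_⟩
    rw [w_zero_left, w_eq_zero (a := a') (b := b') (t := t) (by simpa using h), W_add_self,
      W_add_self]
  by_cases ha' : a' = 0
  · subst ha'
    refine ⟨0, 1, 1, one_ne_zero, one_ne_zero, ?_⟩
    rw [w_zero_left, w_eq_zero (a := a) (b := b) (t := t) (by simpa using h), W_add_self,
      W_add_self]
  refine ⟨a * b, a, a', ha, ha', ?_⟩
  rw [w_eq_sy ha, w_eq_sy ha', sy_congr (α := a' * b') (β := a * b) (t := t) (by grind)]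

/-- A nonzero vector of a plane is the first vector of a symplectic basis. -/
lemma w_basis (a b x y : F) (h : ¬ (x = 0 ∧ y = 0)) :
    ∃ b' t, w (a * x ^ 2 + x * y + b * y ^ 2) b' = w a b ∧
      (a * x ^ 2 + x * y + b * y ^ 2) * b' = a * b + (t ^ 2 + t) := by
  by_cases hx : x = 0
  · have hy : y ≠ 0 := fun hy => h ⟨hx, hy⟩
    refine ⟨a / y ^ 2, a * x / y, ?_, ?_⟩
    · rw [w_swap a b, ← w_chg b a x hy]
      congr 1; ring
    · field_simp; ring
  · refine ⟨b / x ^ 2, b * y / x, w_chg a b y hx, ?_⟩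
    field_simp; ring

/-- Two planes with a common first entry `v` merge into one. -/
lemma red_three_same (v b₀ b₁ a₂ b₂ t : F) (h : v * b₀ + v * b₁ + a₂ * b₂ = t ^ 2 + t) :
    ∃ α g g' : F, g ≠ 0 ∧ g' ≠ 0 ∧ w v b₀ + w v b₁ + w a₂ b₂ = sy α g + sy α g' := by
  rw [w_add_right]
  exact red_two _ _ _ _ t (by rw [← h]; ring)

/-- In a linked field, an Albert form is Witt equivalent to a multiple of a two-fold Pfister
form. -/
lemma albert_red (hl : Linked F) (a₀ b₀ a₁ b₁ a₂ b₂ t : F)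
    (h : a₀ * b₀ + a₁ * b₁ + a₂ * b₂ = t ^ 2 + t) :
    ∃ α g g' : F, g ≠ 0 ∧ g' ≠ 0 ∧ w a₀ b₀ + w a₁ b₁ + w a₂ b₂ = sy α g + sy α g' := by
  obtain ⟨x₀, y₀, x₁, y₁, x₂, y₂, hne, hz⟩ := hl _ _ _ _ _ _ t h
  have hb := fun a b x y => w_basis (F := F) a b x y
  -- A plane containing an isotropic vector is hyperbolic and can be dropped.
  have iso : ∀ a b x y : F, ¬ (x = 0 ∧ y = 0) → a * x ^ 2 + x * y + b * y ^ 2 = 0 →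
      w a b = 0 ∧ ∃ t, a * b = t ^ 2 + t := by
    intro a b x y hxy h0
    obtain ⟨b', s, e, e'⟩ := hb a b x y hxy
    rw [h0] at e e'
    exact ⟨by rw [← e, w_zero_left], s, by grind⟩
  by_cases c₀ : ¬ (x₀ = 0 ∧ y₀ = 0) ∧ a₀ * x₀ ^ 2 + x₀ * y₀ + b₀ * y₀ ^ 2 = 0
  · obtain ⟨e, s, e'⟩ := iso _ _ _ _ c₀.1 c₀.2
    obtain ⟨α, g, g', hg, hg', E⟩ := red_two a₁ b₁ a₂ b₂ (t + s) (by grind)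
    exact ⟨α, g, g', hg, hg', by rw [e, zero_add, E]⟩
  by_cases c₁ : ¬ (x₁ = 0 ∧ y₁ = 0) ∧ a₁ * x₁ ^ 2 + x₁ * y₁ + b₁ * y₁ ^ 2 = 0
  · obtain ⟨e, s, e'⟩ := iso _ _ _ _ c₁.1 c₁.2
    obtain ⟨α, g, g', hg, hg', E⟩ := red_two a₀ b₀ a₂ b₂ (t + s) (by grind)
    exact ⟨α, g, g', hg, hg', by rw [e, add_zero, E]⟩
  by_cases c₂ : ¬ (x₂ = 0 ∧ y₂ = 0) ∧ a₂ * x₂ ^ 2 + x₂ * y₂ + b₂ * y₂ ^ 2 = 0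
  · obtain ⟨e, s, e'⟩ := iso _ _ _ _ c₂.1 c₂.2
    obtain ⟨α, g, g', hg, hg', E⟩ := red_two a₀ b₀ a₁ b₁ (t + s) (by grind)
    exact ⟨α, g, g', hg, hg', by rw [e, add_zero, E]⟩
  by_cases z₀ : x₀ = 0 ∧ y₀ = 0
  · by_cases z₁ : x₁ = 0 ∧ y₁ = 0
    · exact (c₂ ⟨by tauto, by simpa [z₀, z₁] using hz⟩).elim
    by_cases z₂ : x₂ = 0 ∧ y₂ = 0
    · exact (c₁ ⟨by tauto, by simpa [z₀, z₂] using hz⟩).elim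
    obtain ⟨b₁', s₁, E₁, A₁⟩ := hb a₁ b₁ x₁ y₁ z₁
    obtain ⟨b₂', s₂, E₂, A₂⟩ := hb a₂ b₂ x₂ y₂ z₂
    have ev : a₂ * x₂ ^ 2 + x₂ * y₂ + b₂ * y₂ ^ 2 = a₁ * x₁ ^ 2 + x₁ * y₁ + b₁ * y₁ ^ 2 := by
      obtain ⟨rfl, rfl⟩ := z₀; grind
    rw [ev] at E₂ A₂
    obtain ⟨α, g, g', hg, hg', E⟩ := red_three_same _ b₁' b₂' a₀ b₀ (t + s₁ + s₂)
      (by rw [A₁, A₂]; grind)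
    refine ⟨α, g, g', hg, hg', ?_⟩
    rw [← E, E₁, E₂]; abel
  obtain ⟨b₀', s₀, E₀, A₀⟩ := hb a₀ b₀ x₀ y₀ z₀
  by_cases z₁ : x₁ = 0 ∧ y₁ = 0
  · by_cases z₂ : x₂ = 0 ∧ y₂ = 0
    · exact (c₀ ⟨by tauto, by simpa [z₁, z₂] using hz⟩).elim
    obtain ⟨b₂', s₂, E₂, A₂⟩ := hb a₂ b₂ x₂ y₂ z₂
    have ev : a₂ * x₂ ^ 2 + x₂ * y₂ + b₂ * y₂ ^ 2 = a₀ * x₀ ^ 2 + x₀ * y₀ + b₀ * y₀ ^ 2 := by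
      obtain ⟨rfl, rfl⟩ := z₁; grind
    rw [ev] at E₂ A₂
    obtain ⟨α, g, g', hg, hg', E⟩ := red_three_same _ b₀' b₂' a₁ b₁ (t + s₀ + s₂)
      (by rw [A₀, A₂]; grind)
    refine ⟨α, g, g', hg, hg', ?_⟩
    rw [← E, E₀, E₂]; abel
  obtain ⟨b₁', s₁, E₁, A₁⟩ := hb a₁ b₁ x₁ y₁ z₁
  by_cases z₂ : x₂ = 0 ∧ y₂ = 0
  · have ev : a₁ * x₁ ^ 2 + x₁ * y₁ + b₁ * y₁ ^ 2 = a₀ * x₀ ^ 2 + x₀ * y₀ + b₀ * y₀ ^ 2 := by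
      obtain ⟨rfl, rfl⟩ := z₂; grind
    rw [ev] at E₁ A₁
    obtain ⟨α, g, g', hg, hg', E⟩ := red_three_same _ b₀' b₁' a₂ b₂ (t + s₀ + s₁)
      (by rw [A₀, A₁]; grind)
    refine ⟨α, g, g', hg, hg', ?_⟩
    rw [← E, E₀, E₁]
  obtain ⟨b₂', s₂, E₂, A₂⟩ := hb a₂ b₂ x₂ y₂ z₂
  generalize a₀ * x₀ ^ 2 + x₀ * y₀ + b₀ * y₀ ^ 2 = v₀ at *
  generalize a₁ * x₁ ^ 2 + x₁ * y₁ + b₁ * y₁ ^ 2 = v₁ at *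
  generalize a₂ * x₂ ^ 2 + x₂ * y₂ + b₂ * y₂ ^ 2 = v₂ at *
  have ev : v₀ = v₁ + v₂ := by grind
  obtain ⟨α, g, g', hg, hg', E⟩ := red_two v₁ (b₁' + b₀') v₂ (b₂' + b₀') (t + s₀ + s₁ + s₂)
    (by grind)
  refine ⟨α, g, g', hg, hg', ?_⟩
  rw [← E, ← E₀, ← E₁, ← E₂, ev, ← w_add, ← w_add_right, ← w_add_right]
  abel

/-- The Albert form `[1,α₁+α₂] ⊥ b₁[1,α₁] ⊥ b₂[1,α₂]` has an isotropic vector whose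
`[1,α₁+α₂]`-component has second coordinate `1`. -/
lemma link_vector (hl : Linked F) (α₁ α₂ : F) {b₁ b₂ : F} (h₁ : b₁ ≠ 0) (h₂ : b₂ ≠ 0) :
    ∃ t p₁ r₁ p₂ r₂, t ^ 2 + t + (α₁ + α₂) + b₁ * nm α₁ p₁ r₁ + b₂ * nm α₂ p₂ r₂ = 0 := by
  obtain ⟨t, s, p₁, y₁, p₂, y₂, hne, hz⟩ := hl 1 (α₁ + α₂) b₁ (α₁ / b₁) b₂ (α₂ / b₂) 0 (by grind)
  obtain ⟨r₁, rfl⟩ : ∃ r, y₁ = b₁ * r := ⟨y₁ / b₁, by field_simp⟩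
  obtain ⟨r₂, rfl⟩ : ∃ r, y₂ = b₂ * r := ⟨y₂ / b₂, by field_simp⟩
  have hz' : t ^ 2 + t * s + (α₁ + α₂) * s ^ 2 + b₁ * nm α₁ p₁ r₁ + b₂ * nm α₂ p₂ r₂ = 0 := by
    rw [← hz]; unfold nm; field_simp
  clear hz
  simp only [mul_eq_zero, h₁, h₂, false_or] at hne
  unfold nm at *
  by_cases hs : s = 0
  · subst hs
    -- The isotropic vector `v` lies in the hyperplane `s = 0`. The vector sought is `l·v + e`,
    -- where `e` has `s`-coordinate `1` and is not orthogonal to `v`, so that the linear equation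
    -- `q(e) + l·B(v,e) = 0` has a solution `l`.
    by_cases ht : t = 0
    · subst ht
      by_cases hp₁ : p₁ = 0
      · by_cases hr₁ : r₁ = 0
        · by_cases hp₂ : p₂ = 0
          · have hr₂ : r₂ ≠ 0 := by tauto
            obtain ⟨l, hl⟩ : ∃ l, l * (b₂ * r₂) = α₁ + α₂ + b₂ :=
              ⟨(α₁ + α₂ + b₂) / (b₂ * r₂), by field_simp⟩
            exact ⟨0, l * p₁, l * r₁, l * p₂ + 1, l * r₂, by grind⟩
          · obtain ⟨l, hl⟩ : ∃ l, l * (b₂ * p₂) = α₁ + α₂ + b₂ * α₂ :=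
              ⟨(α₁ + α₂ + b₂ * α₂) / (b₂ * p₂), by field_simp⟩
            exact ⟨0, l * p₁, l * r₁, l * p₂, l * r₂ + 1, by grind⟩
        · obtain ⟨l, hl⟩ : ∃ l, l * (b₁ * r₁) = α₁ + α₂ + b₁ :=
            ⟨(α₁ + α₂ + b₁) / (b₁ * r₁), by field_simp⟩
          exact ⟨0, l * p₁ + 1, l * r₁, l * p₂, l * r₂, by grind⟩
      · obtain ⟨l, hl⟩ : ∃ l, l * (b₁ * p₁) = α₁ + α₂ + b₁ * α₁ :=
          ⟨(α₁ + α₂ + b₁ * α₁) / (b₁ * p₁), by field_simp⟩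
        exact ⟨0, l * p₁, l * r₁ + 1, l * p₂, l * r₂, by grind⟩
    · obtain ⟨l, hl⟩ : ∃ l, l * t = α₁ + α₂ := ⟨(α₁ + α₂) / t, by field_simp⟩
      exact ⟨l * t, l * p₁, l * r₁, l * p₂, l * r₂, by grind⟩
  · refine ⟨t / s, p₁ / s, r₁ / s, p₂ / s, r₂ / s, ?_⟩
    field_simp
    linear_combination hz'

/-- Linkage: two quaternion algebras `[α₁,b₁)`, `[α₂,b₂)` have presentations with a common first
slot. -/
lemma link (hl : Linked F) (α₁ α₂ : F) {b₁ b₂ : F} (h₁ : b₁ ≠ 0) (h₂ : b₂ ≠ 0) :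
    ∃ ε c₁ c₂ : F, c₁ ≠ 0 ∧ c₂ ≠ 0 ∧
      (∀ x, x ≠ 0 → dbl (sy α₁) b₁ x = dbl (sy ε) c₁ x) ∧
      (∀ x, x ≠ 0 → dbl (sy α₂) b₂ x = dbl (sy ε) c₂ x) := by
  obtain ⟨t, p₁, r₁, p₂, r₂, h⟩ := link_vector hl α₁ α₂ h₁ h₂
  obtain ⟨c₁, hc₁, e₁⟩ := sy_slot α₁ p₁ r₁ h₁
  obtain ⟨c₂, hc₂, e₂⟩ := sy_slot α₂ p₂ r₂ h₂
  refine ⟨α₁ + b₁ * nm α₁ p₁ r₁, c₁, c₂, hc₁, hc₂, fun x hx => e₁ x hx, fun x hx => ?_⟩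
  have hε : α₂ + b₂ * nm α₂ p₂ r₂ = α₁ + b₁ * nm α₁ p₁ r₁ + (t ^ 2 + t) := by grind
  rw [dbl, e₂ x hx, sy_congr hε, sy_congr hε]
  rfl

/-- Over a linked field, a three-fold Pfister form is unchanged by scaling, i.e. `I_q⁴F = 0`. -/
lemma Pf_scale (hl : Linked F) (α : F) {c₁ c₂ k : F} (h₁ : c₁ ≠ 0) (h₂ : c₂ ≠ 0) (hk : k ≠ 0)
    (x : F) : Pf α c₁ c₂ (x * k) = Pf α c₁ c₂ x := by
  by_cases hα : ∀ t, α ≠ t ^ 2 + t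
  swap
  · push Not at hα
    obtain ⟨t, ht⟩ := hα
    rw [Pf_of_wp ht, Pf_of_wp ht]
  -- The planes of the Albert form are a four-dimensional subform of the Pfister form, spanned by
  -- vectors depending on `r`, and `k·[1,α]`. The value of `r` makes the Arf invariant trivial. An
  -- isotropic vector gives a value of the Pfister form of the shape `k·nm α z W`.
  obtain ⟨r, hr⟩ : ∃ r, r = 1 + α / c₂ := ⟨_, rfl⟩
  have hr' : c₂ * r = c₂ + α := by rw [hr]; field_simp
  obtain ⟨t, s, X, y, z, v, hne, hz⟩ := hl 1 (α + c₂ * (1 + r + α * r ^ 2))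
    c₁ ((α + c₂ * α * r ^ 2) / c₁) k (α / k) 0 (by
      field_simp
      grind)
  obtain ⟨Y, rfl⟩ : ∃ Y, y = c₁ * Y := ⟨y / c₁, by field_simp⟩
  obtain ⟨W, rfl⟩ : ∃ W, v = k * W := ⟨v / k, by field_simp⟩
  simp only [mul_eq_zero, h₁, hk, false_or] at hne
  have hz' : nm α t s + c₁ * nm α X Y + c₂ * (nm α s (s * r) + c₁ * nm α 0 (Y * r)) =
      k * nm α z W := by
    refine CharTwo.add_eq_zero.1 (Eq.trans ?_ hz)
    unfold nm; field_simp; ring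
  by_cases hzW : nm α z W = 0
  · obtain ⟨hz0, hW0⟩ := nm_eq_zero hα hzW
    have hiso : ∀ x, Pf α c₁ c₂ x = 0 := fun x =>
      Pf_eq_zero hα h₁ h₂ t s X Y s (s * r) 0 (Y * r) x (by tauto) (by rw [hz', hzW, mul_zero])
    rw [hiso, hiso]
  · have e₁ := Pf_round (α := α) h₁ h₂ z W 0 0 0 0 0 0 (nm α z W) (x * k) (by simp [nm_zero]) hzW
    rw [← e₁, mul_assoc]
    exact Pf_round h₁ h₂ _ _ _ _ _ _ _ _ _ _ hz'.symm (mul_ne_zero hk hzW)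

lemma dbl_congr {f g : F → Witt F} {c x : F} (h : f x = g x) (h' : f (x * c) = g (x * c)) :
    dbl f c x = dbl g c x := by rw [dbl, dbl, h, h']

/-- A nonzero value `v` of the pure part of a three-fold Pfister form is one of its slots. -/
lemma Pf_pure (ε : F) {c₁ c₂ : F} (h₁ : c₁ ≠ 0) (h₂ : c₂ ≠ 0) (p₁ r₁ p₂ r₂ p₃ r₃ v : F)
    (hv : v = c₁ * nm ε p₁ r₁ + c₂ * (nm ε p₂ r₂ + c₁ * nm ε p₃ r₃)) (hv0 : v ≠ 0) :
    ∃ c, c ≠ 0 ∧ ∀ x, x ≠ 0 → Pf ε c₁ c₂ x = Pf ε c v x := by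
  have D1 := (Rd_sy ε).dbl h₁
  -- Replace `c₁` by `c₁ * nm ε p₁ r₁` when the latter is nonzero.
  have hA : nm ε p₁ r₁ ≠ 0 → ∀ x, dbl (sy ε) c₁ x = dbl (sy ε) (c₁ * nm ε p₁ r₁) x := by
    intro h x
    rw [dbl, dbl, ← mul_assoc, sy_norm _ _ _ _ h]
  by_cases hM : nm ε p₂ r₂ + c₁ * nm ε p₃ r₃ = 0
  · rw [hM, mul_zero, add_zero] at hv
    have hn : nm ε p₁ r₁ ≠ 0 := by
      intro h; rw [h, mul_zero] at hv; exact hv0 hv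
    refine ⟨c₂, h₂, fun x _ => ?_⟩
    rw [Pf_comm ε c₂ v, hv]
    exact dbl_congr (hA hn _) (hA hn _)
  · have hC : ∀ x, Pf ε c₁ c₂ x = Pf ε c₁ (c₂ * (nm ε p₂ r₂ + c₁ * nm ε p₃ r₃)) x := by
      intro x
      rw [Pf, Pf, dbl.eq_1 _ c₂, dbl.eq_1 _ (c₂ * _), ← mul_assoc,
        D1.sim _ (mem_D1 ε c₁ p₂ r₂ p₃ r₃) hM]
    have hC0 := mul_ne_zero h₂ hM
    generalize c₂ * (nm ε p₂ r₂ + c₁ * nm ε p₃ r₃) = C at *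
    by_cases hn : nm ε p₁ r₁ = 0
    · rw [hn, mul_zero, zero_add] at hv
      exact ⟨c₁, h₁, fun x _ => by rw [hC, hv]⟩
    · have hA' := hA hn
      have hA0 := mul_ne_zero h₁ hn
      generalize c₁ * nm ε p₁ r₁ = A at *
      refine ⟨A * C, mul_ne_zero hA0 hC0, fun x hx => ?_⟩
      have e : Pf ε c₁ C x = Pf ε A C x := dbl_congr (hA' _) (hA' _)
      rw [hC, e, Pf_expand, Pf_expand]
      have e₁ := sy_sum ε (x * A) (x * C)
      rw [show x * A * (x * C) * (x * A + x * C) = x * v * (A * C) * x ^ 2 by rw [hv]; ring,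
        sy_sq _ _ hx, show x * A + x * C = x * v by rw [hv]; ring] at e₁
      rw [show x * C * A = x * (A * C) by ring]
      linear_combination (norm := (match_scalars <;> decide)) (1 : ZMod 2) • e₁

/-- Trading the slot `D = v + g²` for `v`, at the cost of changing the étale slot. -/
lemma dbl_change (ε : F) {D v g : F} (hD : D ≠ 0) (h : D = v + g ^ 2) {x : F}
    (hx : x ≠ 0) : dbl (sy ε) D x = dbl (sy (ε * v / D)) v x := by
  have e₁ := w_add (x * v) (x * g ^ 2) (ε / (x * D))
  have e₂ := w_sq x (ε / (x * D)) g
  have e₃ := w_add_right x (ε / x) (ε / (x * D) * g ^ 2)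
  have e₄ : w (x * v) (ε * v / D / (x * v)) = w (x * v) (ε / (x * D)) := by
    by_cases hv : v = 0
    · simp [hv, w_zero_left]
    · congr 1; field_simp
  have e₅ : ε / x + ε / (x * D) * g ^ 2 = ε * v / D / x := by
    field_simp; grind
  rw [show x * v + x * g ^ 2 = x * D by rw [h]; ring] at e₁
  rw [e₅] at e₃
  simp only [dbl, sy]
  rw [e₄]
  linear_combination (norm := (match_scalars <;> decide)) (1 : ZMod 2) • (e₁ + e₂ + e₃)

/-- Over a linked field, the sum of two three-fold Pfister forms with the same étale slot is Witt
equivalent to a three-fold Pfister form. -/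
lemma Pf_sum (hl : Linked F) (ε : F) {c₁ c₂ d₁ d₂ : F} (h₁ : c₁ ≠ 0) (h₂ : c₂ ≠ 0) (k₁ : d₁ ≠ 0)
    (k₂ : d₂ ≠ 0) : ∃ η e₁ e₂ : F, e₁ ≠ 0 ∧ e₂ ≠ 0 ∧
      Pf ε c₁ c₂ 1 + Pf ε d₁ d₂ 1 = Pf η e₁ e₂ 1 := by
  by_cases hε : ∀ t, ε ≠ t ^ 2 + t
  swap
  · push Not at hε
    obtain ⟨t, ht⟩ := hε
    exact ⟨ε, 1, 1, one_ne_zero, one_ne_zero, by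
      rw [Pf_of_wp ht, Pf_of_wp ht, Pf_of_wp ht, add_zero]⟩
  -- The Albert form compares values `v` of the pure part of the first form, shifted by the square
  -- `g²`, with those of `d₁·[1,ε]`; again `r` is chosen to make its Arf invariant trivial.
  obtain ⟨r, hr⟩ : ∃ r, r = 1 + ε / c₂ := ⟨_, rfl⟩
  have hr' : c₂ * r = c₂ + ε := by rw [hr]; field_simp
  obtain ⟨x, y, z, v', t, s, hne, hz⟩ := hl c₁ ((ε + c₂ * nm ε 1 r) / c₁)
    (c₂ + c₂ ^ 2 * r ^ 2) (ε / c₂) d₁ (ε / d₁) 0 (by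
      unfold nm
      field_simp
      grind)
  obtain ⟨Y, rfl⟩ : ∃ Y, y = c₁ * Y := ⟨y / c₁, by field_simp⟩
  obtain ⟨W, rfl⟩ : ∃ W, v' = c₂ * W := ⟨v' / c₂, by field_simp⟩
  obtain ⟨S, rfl⟩ : ∃ S, s = d₁ * S := ⟨s / d₁, by field_simp⟩
  simp only [mul_eq_zero, h₁, h₂, k₁, false_or] at hne
  obtain ⟨v, hv⟩ : ∃ v, v = c₁ * nm ε x Y + c₂ * (nm ε z W + c₁ * nm ε Y (r * Y)) := ⟨_, rfl⟩
  obtain ⟨g, hg⟩ : ∃ g, g = c₂ * r * z := ⟨_, rfl⟩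
  have hD : d₁ * nm ε t S = v + g ^ 2 := by
    rw [← CharTwo.add_eq_zero, ← hz, hv, hg]; unfold nm; field_simp; ring
  by_cases htS : nm ε t S = 0
  · obtain ⟨ht, hS⟩ := nm_eq_zero hε htS
    refine ⟨ε, d₁, d₂, k₁, k₂, ?_⟩
    rw [Pf_eq_zero hε h₁ h₂ g 0 x Y z W Y (r * Y) 1 (by tauto), zero_add]
    rw [htS, mul_zero, hv] at hD
    rw [nm_sq]
    linear_combination -hD
  have hDne := mul_ne_zero k₁ htS
  by_cases hv0 : v = 0
  · refine ⟨ε, c₁, c₂, h₁, h₂, ?_⟩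
    rw [Pf_eq_zero hε k₁ k₂ g 0 t S 0 0 0 0 1, add_zero]
    · rintro ⟨-, -, rfl, rfl, -⟩
      exact htS (nm_zero ε)
    · rw [nm_sq, nm_zero, hD, hv0]; grind
  obtain ⟨c, hc, ec⟩ := Pf_pure ε h₁ h₂ _ _ _ _ _ _ v hv hv0
  have ed : Pf ε d₁ d₂ 1 = Pf (ε * v / (d₁ * nm ε t S)) v d₂ 1 := by
    have e : ∀ x, x ≠ 0 → dbl (sy ε) d₁ x = dbl (sy (ε * v / (d₁ * nm ε t S))) v x := by
      intro x hx
      rw [← dbl_change ε hDne hD hx, dbl, dbl, ← mul_assoc x d₁, sy_norm _ _ _ _ htS]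
    exact dbl_congr (e _ one_ne_zero) (e _ (by simpa using k₂))
  rw [ec 1 one_ne_zero, ed, Pf_comm _ v d₂]
  obtain ⟨η, c', d', hc', hd', l₁, l₂⟩ := link hl ε (ε * v / (d₁ * nm ε t S)) hc k₂
  refine ⟨η, v, c' * d', hv0, mul_ne_zero hc' hd', ?_⟩
  rw [← Pf_scale hl η hv0 (mul_ne_zero hc' hd') hc', one_mul]
  rw [Pf, Pf, dbl_congr (l₁ _ one_ne_zero) (l₁ _ (by simpa using hv0)),
    dbl_congr (l₂ _ one_ne_zero) (l₂ _ (by simpa using hv0)), Pf]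
  simp only [dbl, one_mul]
  rw [show c' * (c' * d') = d' * c' ^ 2 by ring, sy_sq _ _ hc',
    show d' * c' ^ 2 * v = v * d' * c' ^ 2 by ring, sy_sq _ _ hc', mul_comm c' v]
  linear_combination (norm := (match_scalars <;> decide)) (1 : ZMod 2) • (rfl : (0 : Witt F) = 0)

/-- Over a linked field, every ten-dimensional form is Witt equivalent to one of dimension eight.
Modulo multiples `k·[1,d]`, the first four planes become multiples `x₁,…,x₄` of one norm form
`[1,ε]`, by linkage. These are completed to two three-fold Pfister forms, which add up to a third
one by `Pf_sum`, at the cost of the planes `k·⟨⟨δ,ε]]`. After one more linkage and a scaling by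
`Pf_scale`, one plane cancels and two planes with first entry `k` merge. -/
lemma five_to_four (hl : Linked F) (a b : Fin 5 → F) :
    ∃ a' b' : Fin 4 → F, ∑ i, w (a i) (b i) = ∑ i, w (a' i) (b' i) := by
  suffices h : ∃ a₀ b₀ a₁ b₁ a₂ b₂ a₃ b₃, w (a 0) (b 0) + w (a 1) (b 1) + w (a 2) (b 2) +
      w (a 3) (b 3) + w (a 4) (b 4) = w a₀ b₀ + w a₁ b₁ + w a₂ b₂ + w a₃ b₃ by
    obtain ⟨a₀, b₀, a₁, b₁, a₂, b₂, a₃, b₃, h⟩ := h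
    refine ⟨![a₀, a₁, a₂, a₃], ![b₀, b₁, b₂, b₃], ?_⟩
    simpa [Fin.sum_univ_succ, add_assoc] using h
  generalize hk : a 4 = k
  generalize b 4 = b₄
  by_cases hk0 : k = 0
  · exact ⟨a 0, b 0, a 1, b 1, a 2, b 2, a 3, b 3, by rw [hk0, w_zero_left, add_zero]⟩
  generalize a 0 = a₀
  generalize b 0 = b₀
  generalize a 1 = a₁
  generalize b 1 = b₁
  generalize a 2 = a₂
  generalize b 2 = b₂
  generalize a 3 = a₃
  generalize b 3 = b₃
  -- Split off `k`-multiples so that both pairs of planes become Albert forms.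
  obtain ⟨α₁, g₁, g₁', hg₁, hg₁', E₁⟩ := albert_red hl a₀ b₀ a₁ b₁ k ((a₀ * b₀ + a₁ * b₁) / k) 0
    (by rw [mul_div_cancel₀ _ hk0]; grind)
  obtain ⟨α₂, g₂, g₂', hg₂, hg₂', E₂⟩ := albert_red hl a₂ b₂ a₃ b₃ k ((a₂ * b₂ + a₃ * b₃) / k) 0
    (by rw [mul_div_cancel₀ _ hk0]; grind)
  obtain ⟨ε, c₁, c₂, hc₁, hc₂, l₁, l₂⟩ :=
    link hl α₁ α₂ (div_ne_zero hg₁' hg₁) (div_ne_zero hg₂' hg₂)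
  have L₁ := l₁ g₁ hg₁
  have L₂ := l₂ g₂ hg₂
  simp only [dbl] at L₁ L₂
  rw [mul_div_cancel₀ _ hg₁] at L₁
  rw [mul_div_cancel₀ _ hg₂] at L₂
  have hx₂ := mul_ne_zero hg₁ hc₁
  have hx₄ := mul_ne_zero hg₂ hc₂
  generalize g₁ * c₁ = x₂ at *
  generalize g₂ * c₂ = x₄ at *
  obtain ⟨x₁, rfl⟩ : ∃ x, x = g₁ := ⟨_, rfl⟩
  obtain ⟨x₃, rfl⟩ : ∃ x, x = g₂ := ⟨_, rfl⟩
  -- The remaining plane is a multiple of `[1,Δ]` by `k`.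
  obtain ⟨Δ, hΔ⟩ : ∃ Δ, Δ = a₀ * b₀ + a₁ * b₁ + (a₂ * b₂ + a₃ * b₃) + k * b₄ := ⟨_, rfl⟩
  have E₃ : w k b₄ + w k ((a₀ * b₀ + a₁ * b₁) / k) + w k ((a₂ * b₂ + a₃ * b₃) / k) = sy Δ k := by
    rw [w_add_right, w_add_right, sy, hΔ]
    congr 1; field_simp; ring
  have hδ : x₁ * x₂ * x₃ * x₄ ≠ 0 := by simp [hg₁, hx₂, hg₂, hx₄]
  obtain ⟨δ, hδe⟩ : ∃ δ, δ = x₁ * x₂ * x₃ * x₄ := ⟨_, rfl⟩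
  rw [← hδe] at hδ
  -- `x₁,…,x₄` are the entries of the two scaled Pfister forms other than `x₁x₂x₃`, `k` and `kδ`.
  have S₁ := Pf_scale hl ε (mul_ne_zero hg₁ hx₂) (mul_ne_zero hg₁ hg₂) hg₁ 1
  have S₂ := Pf_scale hl ε (mul_ne_zero hx₄ hk0) hδ hx₄ 1
  obtain ⟨η, e₁, e₂, he₁, he₂, P⟩ := Pf_sum hl ε (mul_ne_zero hg₁ hx₂) (mul_ne_zero hg₁ hg₂)
    (mul_ne_zero hx₄ hk0) hδ
  rw [one_mul, Pf_expand] at S₁ S₂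
  rw [show x₁ * (x₁ * x₂) = x₂ * x₁ ^ 2 by ring, show x₁ * (x₁ * x₃) = x₃ * x₁ ^ 2 by ring,
    show x₃ * x₁ ^ 2 * (x₁ * x₂) = x₁ * x₂ * x₃ * x₁ ^ 2 by ring, sy_sq _ _ hg₁, sy_sq _ _ hg₁,
    sy_sq _ _ hg₁] at S₁
  rw [show x₄ * δ * (x₄ * k) = k * δ * x₄ ^ 2 by ring,
    show x₄ * (x₄ * k) = k * x₄ ^ 2 by ring, show x₄ * δ = x₁ * x₂ * x₃ * x₄ ^ 2 by rw [hδe]; ring,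
    sy_sq _ _ hx₄, sy_sq _ _ hx₄, sy_sq _ _ hx₄] at S₂
  -- Link the Pfister form just obtained with the remaining planes `k·⟨⟨δ,ε]]`.
  obtain ⟨θ, c, δ', hc, hδ', m₁, m₂⟩ := link hl η ε he₁ hδ
  have M : Pf η e₁ e₂ 1 = Pf θ c e₂ 1 := by
    exact dbl_congr (m₁ _ one_ne_zero) (m₁ _ (by simpa using he₂))
  have M₂ := m₂ k hk0
  have S₃ := Pf_scale hl θ hc he₂ (mul_ne_zero hk0 hδ') 1
  rw [one_mul, Pf_expand] at S₃
  simp only [dbl] at M₂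
  refine ⟨k * δ' * c, θ / (k * δ' * c), k * δ' * e₂, θ / (k * δ' * e₂),
    k * δ' * e₂ * c, θ / (k * δ' * e₂ * c), k, (θ + Δ) / k, ?_⟩
  have A := sy_add θ Δ k
  change _ = sy θ (k * δ' * c) + sy θ (k * δ' * e₂) + sy θ (k * δ' * e₂ * c) + sy (θ + Δ) k
  linear_combination (norm := (match_scalars <;> decide))
    (1 : ZMod 2) • (E₁ + E₂ + E₃ + L₁ + L₂ + S₁ + S₂ + P + M + M₂ + S₃ + A)

/-- If every three-fold Pfister form over a linked field is hyperbolic, six-dimensional forms are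
Witt equivalent to forms of dimension four: modulo `k·[1,Δ]` such a form is `g,g'` times `[1,α]`,
and hyperbolicity of `g·⟨⟨gk,gg',α]]` turns the latter into the multiples `k` and `kgg'` of `[1,α]`. -/
lemma three_to_two (hl : Linked F)
    (hP : ∀ α c₁ c₂ x : F, c₁ ≠ 0 → c₂ ≠ 0 → Pf α c₁ c₂ x = 0) (a b : Fin 3 → F) :
    ∃ a' b' : Fin 2 → F, ∑ i, w (a i) (b i) = ∑ i, w (a' i) (b' i) := by
  suffices h : ∃ a₀ b₀ a₁ b₁, w (a 0) (b 0) + w (a 1) (b 1) + w (a 2) (b 2) =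
      w a₀ b₀ + w a₁ b₁ by
    obtain ⟨a₀, b₀, a₁, b₁, h⟩ := h
    refine ⟨![a₀, a₁], ![b₀, b₁], ?_⟩
    simpa [Fin.sum_univ_succ, add_assoc] using h
  generalize hk : a 2 = k
  generalize b 2 = b₂
  by_cases hk0 : k = 0
  · exact ⟨a 0, b 0, a 1, b 1, by rw [hk0, w_zero_left, add_zero]⟩
  generalize a 0 = a₀
  generalize b 0 = b₀
  generalize a 1 = a₁
  generalize b 1 = b₁
  obtain ⟨α, g, g', hg, hg', E₁⟩ := albert_red hl a₀ b₀ a₁ b₁ k ((a₀ * b₀ + a₁ * b₁) / k) 0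
    (by rw [mul_div_cancel₀ _ hk0]; grind)
  obtain ⟨Δ, hΔ⟩ : ∃ Δ, Δ = a₀ * b₀ + a₁ * b₁ + k * b₂ := ⟨_, rfl⟩
  have E₃ : w k b₂ + w k ((a₀ * b₀ + a₁ * b₁) / k) = sy Δ k := by
    rw [w_add_right, sy, hΔ]
    congr 1; field_simp; ring
  have S := hP α (g * g') (g * k) g (mul_ne_zero hg hg') (mul_ne_zero hg hk0)
  rw [Pf_expand, show g * (g * g') = g' * g ^ 2 by ring,
    show g * (g * k) * (g * g') = k * g * g' * g ^ 2 by ring,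
    show g * (g * k) = k * g ^ 2 by ring, sy_sq _ _ hg, sy_sq _ _ hg, sy_sq _ _ hg] at S
  have A := sy_add α Δ k
  refine ⟨k, (α + Δ) / k, k * g * g', α / (k * g * g'), ?_⟩
  change _ = sy (α + Δ) k + sy α (k * g * g')
  linear_combination (norm := (match_scalars <;> decide)) (1 : ZMod 2) • (E₁ + E₃ + S + A)

end

/-! ### Anisotropic sums of planes and the u-invariant -/

/-- Some orthogonal sum of `n` planes over `F` is anisotropic. -/
def HasAniso (F : Type*) [Field F] (n : ℕ) : Prop :=
  ∃ p : Fin n → F × F, ∀ v : Fin n → F × F, ∑ i, planeVal (p i) (v i) = 0 → v = 0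

section
variable {F : Type*} [Field F] [CharP F 2]

lemma hasAniso_zero : HasAniso F 0 := ⟨0, fun _ _ => Subsingleton.elim _ _⟩

lemma HasAniso.pred {n : ℕ} (h : HasAniso F (n + 1)) : HasAniso F n := by
  obtain ⟨p, hp⟩ := h
  refine ⟨fun i => p i.succ, fun v hv => ?_⟩
  have := hp (Fin.cons 0 v) (by
    rw [Fin.sum_univ_succ]
    simpa [planeVal] using hv)
  funext i
  simpa using congrFun this i.succ

lemma HasAniso.mono {m n : ℕ} (hmn : m ≤ n) (h : HasAniso F n) : HasAniso F m := by
  induction hmn with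
  | refl => exact h
  | step _ ih => exact ih h.pred

/-- If sums of `m` planes are Witt equivalent to shorter ones, none of them is anisotropic. -/
lemma not_hasAniso {m n : ℕ} (hnm : n < m)
    (h : ∀ a b : Fin m → F, ∃ a' b' : Fin n → F, ∑ i, w (a i) (b i) = ∑ i, w (a' i) (b' i)) :
    ¬ HasAniso F m := by
  rintro ⟨p, hp⟩
  obtain ⟨a', b', e⟩ := h (fun i => (p i).1) (fun i => (p i).2)
  obtain ⟨v, hv, h0⟩ := isotropic_of_sum_eq p (fun i => (a' i, b' i)) hnm e
  exact hv (hp v h0)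

lemma not_hasAniso_five (hl : Linked F) : ¬ HasAniso F 5 :=
  not_hasAniso (by norm_num) (five_to_four hl)

/-- If no eight-dimensional form is anisotropic, all three-fold Pfister forms are hyperbolic. -/
lemma Pf_eq_zero_of_not_hasAniso (h : ¬ HasAniso F 4) {α c₁ c₂ : F} (x : F) (h₁ : c₁ ≠ 0)
    (h₂ : c₂ ≠ 0) : Pf α c₁ c₂ x = 0 := by
  by_cases hα : ∀ t, α ≠ t ^ 2 + t
  swap
  · push Not at hα
    obtain ⟨t, ht⟩ := hα
    exact Pf_of_wp ht _ _ _
  by_contra hP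
  refine h ⟨![(1, α), (c₁, α / c₁), (c₂, α / c₂), (c₂ * c₁, α / (c₂ * c₁))], fun v hv => ?_⟩
  have h₃ : c₂ * c₁ ≠ 0 := mul_ne_zero h₂ h₁
  simp only [Fin.sum_univ_four, planeVal, Matrix.cons_val] at hv
  by_contra hne
  refine hP (Pf_eq_zero hα h₁ h₂ (v 0).1 (v 0).2 (v 1).1 ((v 1).2 / c₁) (v 2).1 ((v 2).2 / c₂)
    (v 3).1 ((v 3).2 / (c₂ * c₁)) x ?_ ?_)
  · rintro ⟨e₁, e₂, e₃, e₄, e₅, e₆, e₇, e₈⟩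
    apply hne
    simp only [div_eq_zero_iff, h₁, h₂, h₃, or_false] at e₄ e₆ e₈
    funext i
    fin_cases i <;> ext <;> assumption
  · rw [← hv]
    unfold nm
    field_simp
    ring

lemma not_hasAniso_three (hl : Linked F) (h : ¬ HasAniso F 4) : ¬ HasAniso F 3 :=
  not_hasAniso (by norm_num) (three_to_two hl fun _ _ _ x h₁ h₂ =>
    Pf_eq_zero_of_not_hasAniso h x h₁ h₂)

end

section
universe u
variable {F : Type u} [Field F] [CharP F 2]

/-- Every nonsingular form in characteristic `2` is an orthogonal sum of planes: the polar form is
alternating, so planes split off one at a time. -/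
lemma exists_planes (d : ℕ) : ∀ (V : Type u) [AddCommGroup V] [Module F V] [FiniteDimensional F V]
    (φ : QuadraticForm F V), Module.finrank F V = d →
    (∀ z, (∀ x, polar φ z x = 0) → z = 0) →
    ∃ n, d = 2 * n ∧ ∃ (p : Fin n → F × F) (f : (Fin n → F × F) →ₗ[F] V),
      Function.Injective f ∧ ∀ z, φ (f z) = ∑ i, planeVal (p i) (z i) := by
  induction d using Nat.strong_induction_on with
  | _ d ih =>
  intro V _ _ _ φ hd hφ
  by_cases hd0 : d = 0
  · exact ⟨0, hd0, 0, 0, fun _ _ _ => Subsingleton.elim _ _, fun z => by simp⟩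
  have : Nontrivial V := Module.nontrivial_of_finrank_pos (R := F) (by omega)
  obtain ⟨u, hu⟩ := exists_ne (0 : V)
  obtain ⟨v₀, hv₀⟩ : ∃ v, polar φ u v ≠ 0 := by
    by_contra! h
    exact hu (hφ u h)
  obtain ⟨v, huv⟩ : ∃ v, polar φ u v = 1 :=
    ⟨(polar φ u v₀)⁻¹ • v₀, by rw [polar_smul_right, smul_eq_mul, inv_mul_cancel₀ hv₀]⟩
  have self : ∀ x, polar φ x x = 0 := fun x => by
    rw [polar_self, two_smul, CharTwo.add_self_eq_zero]
  have hvu : polar φ v u = 1 := by rw [polar_comm, huv]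
  -- The orthogonal complement of the plane spanned by `u` and `v`.
  let g : V →ₗ[F] F × F := (φ.polarBilin v).prod (φ.polarBilin u)
  have g_apply : ∀ x, g x = (polar φ v x, polar φ u x) := fun x => rfl
  have gs : Function.Surjective g := by
    rintro ⟨a, b⟩
    refine ⟨a • u + b • v, ?_⟩
    rw [g_apply]
    simp [polar_add_right, polar_smul_right, self, huv, hvu]
  have rk := LinearMap.finrank_range_add_finrank_ker g
  rw [LinearMap.range_eq_top.2 gs, finrank_top, Module.finrank_prod, Module.finrank_self, hd] at rk
  have mem : ∀ x : LinearMap.ker g, polar φ v x = 0 ∧ polar φ u x = 0 := fun x => by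
    have := x.2
    rwa [LinearMap.mem_ker, g_apply, Prod.mk_eq_zero] at this
  obtain ⟨n, hn, p, f, hf, hp⟩ := ih (Module.finrank F (LinearMap.ker g)) (by omega)
    (LinearMap.ker g) (φ.comp (LinearMap.ker g).subtype) rfl (by
      intro z hz
      ext1
      apply hφ
      intro x
      have hx : x - (polar φ v x • u + polar φ u x • v) ∈ LinearMap.ker g := by
        rw [LinearMap.mem_ker, g_apply]
        simp [polar_sub_right, polar_add_right, polar_smul_right, self, huv, hvu]
      have e : polar φ z (x - (polar φ v x • u + polar φ u x • v)) = 0 := hz ⟨_, hx⟩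
      have m := mem z
      rw [polar_comm φ v, polar_comm φ u] at m
      rw [polar_sub_right, polar_add_right, polar_smul_right, polar_smul_right, m.1, m.2] at e
      simpa using e)
  let h : (Fin (n + 1) → F × F) →ₗ[F] V :=
    ((LinearMap.fst F F F).comp (LinearMap.proj 0)).smulRight u +
    ((LinearMap.snd F F F).comp (LinearMap.proj 0)).smulRight v +
    (LinearMap.ker g).subtype.comp (f.comp (LinearMap.funLeft F (F × F) Fin.succ))
  have h_apply : ∀ z, h z = (z 0).1 • u + (z 0).2 • v + f (fun i => z i.succ) := fun z => rfl
  refine ⟨n + 1, by omega, Fin.cons (φ u, φ v) p, h, ?_, ?_⟩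
  · rw [← LinearMap.ker_eq_bot, LinearMap.ker_eq_bot']
    intro z hz
    rw [h_apply] at hz
    have m := mem (f fun i => z i.succ)
    have e₁ : polar φ v ((z 0).1 • u + (z 0).2 • v + f (fun i => z i.succ)) = 0 := by
      rw [hz, polar_zero_right]
    have e₂ : polar φ u ((z 0).1 • u + (z 0).2 • v + f (fun i => z i.succ)) = 0 := by
      rw [hz, polar_zero_right]
    simp only [polar_add_right, polar_smul_right, self, huv, hvu, m.1, m.2, smul_eq_mul, mul_one,
      mul_zero, add_zero, zero_add] at e₁ e₂
    rw [e₁, e₂, zero_smul, zero_smul, zero_add, zero_add] at hz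
    have e₃ : (fun i : Fin n => z i.succ) = 0 := hf (by rw [map_zero]; exact Subtype.ext hz)
    funext i
    refine Fin.cases ?_ (fun j => ?_) i
    · exact Prod.ext e₁ e₂
    · exact congrFun e₃ j
  · intro z
    have m := mem (f fun i => z i.succ)
    have e := hp fun i => z i.succ
    rw [comp_apply, Submodule.subtype_apply] at e
    rw [h_apply, Fin.sum_univ_succ, QuadraticMap.map_add φ, QuadraticMap.map_add φ, e,
      QuadraticMap.map_smul, QuadraticMap.map_smul]
    simp only [polar_add_left, polar_smul_left, polar_smul_right, huv, m.1, m.2, planeVal,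
      Fin.cons_zero, Fin.cons_succ, smul_eq_mul]
    ring

/-- The orthogonal sum of the planes `p i` as a quadratic form. -/
def planeForm {n : ℕ} (p : Fin n → F × F) : QuadraticForm F (Fin n → F × F) :=
  ∑ i, ((p i).1 • linMulLin ((LinearMap.fst F F F).comp (LinearMap.proj i))
      ((LinearMap.fst F F F).comp (LinearMap.proj i)) +
    linMulLin ((LinearMap.fst F F F).comp (LinearMap.proj i))
      ((LinearMap.snd F F F).comp (LinearMap.proj i)) +
    (p i).2 • linMulLin ((LinearMap.snd F F F).comp (LinearMap.proj i))
      ((LinearMap.snd F F F).comp (LinearMap.proj i)))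

lemma planeForm_apply {n : ℕ} (p v : Fin n → F × F) :
    planeForm p v = ∑ i, planeVal (p i) (v i) := by
  rw [planeForm, _root_.sum_apply]
  refine Finset.sum_congr rfl fun i _ => ?_
  simp [planeVal, _root_.sq]

lemma polar_planeForm {n : ℕ} (p v z : Fin n → F × F) :
    polar (planeForm p) v z = polarI (Fin n) v z := by
  rw [polar, planeForm_apply, planeForm_apply, planeForm_apply, polarI_apply,
    ← Finset.sum_sub_distrib, ← Finset.sum_sub_distrib]
  refine Finset.sum_congr rfl fun i _ => ?_
  rw [Pi.add_apply, planeVal_add _ _ _ CharTwo.two_eq_zero]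
  ring

/-- The dimensions of anisotropic nonsingular forms are the even numbers `2n` for which some sum of
`n` planes is anisotropic. -/
lemma exists_form_iff (m : ℕ) : (∃ φ : QuadraticForm F (Fin m → F),
    LinearMap.BilinForm.Nondegenerate φ.polarBilin ∧ φ.Anisotropic) ↔
    ∃ n, m = 2 * n ∧ HasAniso F n := by
  constructor
  · rintro ⟨φ, hnd, ha⟩
    obtain ⟨n, hn, p, f, hf, e⟩ := exists_planes m (Fin m → F) φ (by simp) hnd.1
    refine ⟨n, hn, p, fun v hv => hf ?_⟩
    rw [map_zero]
    exact ha _ (by rw [e, hv])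
  · rintro ⟨n, rfl, p, hp⟩
    let e : (Fin (2 * n) → F) ≃ₗ[F] (Fin n → F × F) := LinearEquiv.ofFinrankEq _ _ (by
      simp [Module.finrank_pi_fintype]; ring)
    have pol : ∀ x y, polar ((planeForm p).comp e.toLinearMap) x y =
        polarI (Fin n) (e x) (e y) := by
      intro x y
      rw [← polar_planeForm p]
      simp [polar]
    have nd : ∀ x, (∀ y, polar ((planeForm p).comp e.toLinearMap) x y = 0) → x = 0 := by
      intro x hx
      apply e.injective
      rw [map_zero]
      refine (polarI_nondeg (Fin n)).1 _ fun y => ?_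
      rw [← e.apply_symm_apply y, ← pol]
      exact hx _
    refine ⟨(planeForm p).comp e.toLinearMap, ⟨nd, fun y hy => nd y fun x => ?_⟩, fun x hx => ?_⟩
    · rw [polar_comm]
      exact hy x
    · apply e.injective
      rw [map_zero]
      exact hp _ (by rw [← planeForm_apply]; exact hx)

/-- Anisotropic forms restrict to anisotropic subforms, so the first failure bounds all
dimensions. -/
lemma isGreatest_of_hasAniso {n : ℕ} (h : HasAniso F n) (h' : ¬ HasAniso F (n + 1)) :
    IsGreatest {m : ℕ | ∃ φ : QuadraticForm F (Fin m → F),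
      LinearMap.BilinForm.Nondegenerate φ.polarBilin ∧ φ.Anisotropic} (2 * n) := by
  refine ⟨(exists_form_iff _).2 ⟨n, rfl, h⟩, fun m hm => ?_⟩
  obtain ⟨k, rfl, hk⟩ := (exists_form_iff m).1 hm
  by_contra hlt
  exact h' (hk.mono (by omega))

/-- The hypothesis of the theorem, unfolded into coordinates. -/
lemma linked_of_albertForm (hlinked : ∀ a b : Fin 3 → F,
      (∃ t : F, a 0 * b 0 + a 1 * b 1 + a 2 * b 2 = t ^ 2 + t) →
      ∃ v, v ≠ 0 ∧ albertForm F a b v = 0) : Linked F := by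
  intro a₀ b₀ a₁ b₁ a₂ b₂ t h
  obtain ⟨⟨x, y, z⟩, hv, h0⟩ := hlinked ![a₀, a₁, a₂] ![b₀, b₁, b₂] ⟨t, by simpa using h⟩
  refine ⟨x 0, x 1, y 0, y 1, z 0, z 1, ?_, ?_⟩
  · rintro ⟨h₁, h₂, h₃, h₄, h₅, h₆⟩
    apply hv
    have e : ∀ x : Fin 2 → F, x 0 = 0 → x 1 = 0 → x = 0 := fun x h h' => by
      funext i
      fin_cases i
      · exact h
      · exact h'
    rw [e x h₁ h₂, e y h₃ h₄, e z h₅ h₆]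
    rfl
  · rw [← h0]
    simp only [albertForm, twoDimForm, QuadraticMap.prod_apply, _root_.add_apply,
      _root_.smul_apply, proj_apply, smul_eq_mul, Matrix.cons_val]
    ring

end

theorem statement10 (F : Type*) [Field F] [CharP F 2]
    (hlinked : ∀ a b : Fin 3 → F,
      (∃ t : F, a 0 * b 0 + a 1 * b 1 + a 2 * b 2 = t ^ 2 + t) →
      ∃ v, v ≠ 0 ∧ albertForm F a b v = 0) :
    ∃ u : ℕ, (u = 0 ∨ u = 2 ∨ u = 4 ∨ u = 8) ∧
      IsGreatest {m : ℕ | ∃ φ : QuadraticForm F (Fin m → F),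
        LinearMap.BilinForm.Nondegenerate φ.polarBilin ∧ φ.Anisotropic} u := by
  have hl := linked_of_albertForm hlinked
  by_cases h₄ : HasAniso F 4
  · exact ⟨8, by simp, isGreatest_of_hasAniso h₄ (not_hasAniso_five hl)⟩
  have h₃ := not_hasAniso_three hl h₄
  by_cases h₂ : HasAniso F 2
  · exact ⟨4, by simp, isGreatest_of_hasAniso h₂ h₃⟩
  by_cases h₁ : HasAniso F 1
  · exact ⟨2, by simp, isGreatest_of_hasAniso h₁ h₂⟩
  · exact ⟨0, by simp, isGreatest_of_hasAniso hasAniso_zero h₁⟩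

end
end

section
/- Let F be a field with char(F) ≠ 2 containing a square root of −1, let α, β ∈ F^×, let π = ⟨⟨α,β⟩⟩ = ⟨1,α⟩⊗⟨1,β⟩ be a 2-fold Pfister form, and let λ₁, λ₂, λ₃ ∈ F^×. Then the form ρ = ⟨λ₁,λ₂,λ₃⟩ ⊗ π contains the 6-dimensional subform λ₁⟨α,β⟩ ⊥ λ₂⟨α,αβ⟩ ⊥ λ₃⟨αβ,β⟩, which has trivial discriminant and hence is an Albert form; consequently every 4-fold Pfister form over F contains an Albert subform. -/
/-!
Both isometries are permutations of coordinates. In the coordinates `((x, y), (z, w))` the form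
`⟨⟨α,β⟩⟩` is the diagonal form `⟨1,β,α,αβ⟩`, so `⟨λ₁,λ₂,λ₃⟩ ⊗ ⟨⟨α,β⟩⟩` is diagonal with twelve
entries, six of which are those of the Albert form; the other six span its orthogonal complement.
The product of the six entries is `(λ₁λ₂λ₃α²β²)²`. Moreover
`⟨⟨c₁,c₂,c₃,c₄⟩⟩ = ⟨1,c₂,c₁,c₁c₂⟩ ⊗ ⟨⟨c₃,c₄⟩⟩` contains `⟨1,c₂,c₁⟩ ⊗ ⟨⟨c₃,c₄⟩⟩`, and the Albert
subform of the latter is an Albert subform of the 4-fold Pfister form.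
-/

/-!
STATEMENT 12 (Remark `charnot2`):
Let `F` be a field with `char(F) ≠ 2` containing a square root of −1, let
`π = ⟨⟨α,β⟩⟩ = ⟨1,α⟩⊗⟨1,β⟩` be a 2-fold Pfister form (`α, β ∈ F^×`), and let
`λ₁, λ₂, λ₃ ∈ F^×`.  Then `ρ = ⟨λ₁,λ₂,λ₃⟩ ⊗ π = λ₁·π ⊥ λ₂·π ⊥ λ₃·π` contains the
6-dimensional subform `σ = λ₁⟨α,β⟩ ⊥ λ₂⟨α,αβ⟩ ⊥ λ₃⟨αβ,β⟩`, which has trivial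
discriminant (the product of its diagonal entries is a nonzero square) and hence is
an Albert form; consequently every 4-fold Pfister form `⟨⟨c₁,c₂,c₃,c₄⟩⟩` over `F`
contains an Albert subform (a 6-dimensional nondegenerate diagonal form `⟨w₁,…,w₆⟩`
with all `wᵢ ≠ 0` and trivial discriminant).

Diagonal forms `⟨c₁,…,cₙ⟩` are realized as `QuadraticMap.weightedSumSquares`, and
`⟨1,c⟩ ⊗ φ = φ ⊥ c·φ` builds the Pfister forms.
-/

noncomputable section

open QuadraticMap

/-- The diagonal binary form `⟨1, b⟩ : (x,y) ↦ x² + by²`. -/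
def diag1 (F : Type*) [Field F] (b : F) : QuadraticForm F (F × F) :=
  (QuadraticMap.sq (R := F)).prod (b • QuadraticMap.sq (R := F))

/-- The 2-fold Pfister form `⟨⟨α,β⟩⟩ = ⟨1,α⟩⊗⟨1,β⟩ = ⟨1,β⟩ ⊥ α·⟨1,β⟩`. -/
def pfister2Diag (F : Type*) [Field F] (α β : F) :
    QuadraticForm F ((F × F) × (F × F)) :=
  (diag1 F β).prod (α • diag1 F β)

/-- The 3-fold Pfister form `⟨⟨α,β,γ⟩⟩ = ⟨⟨β,γ⟩⟩ ⊥ α·⟨⟨β,γ⟩⟩`. -/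
def pfister3Diag (F : Type*) [Field F] (α β γ : F) :=
  (pfister2Diag F β γ).prod (α • pfister2Diag F β γ)

/-- The 4-fold Pfister form `⟨⟨α,β,γ,δ⟩⟩ = ⟨⟨β,γ,δ⟩⟩ ⊥ α·⟨⟨β,γ,δ⟩⟩`. -/
def pfister4Diag (F : Type*) [Field F] (α β γ δ : F) :=
  (pfister3Diag F β γ δ).prod (α • pfister3Diag F β γ δ)

/-- The space of a 2-fold Pfister form, with coordinates for `⟨1,β,α,αβ⟩`. -/
abbrev PfisterSpace (F : Type*) := (F × F) × (F × F)

/-- The permutation of coordinates splitting `⟨λ₁,λ₂,λ₃⟩ ⊗ ⟨⟨α,β⟩⟩` into the entries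
`λ₁α, λ₁β, λ₂α, λ₂αβ, λ₃αβ, λ₃β` and the entries `λ₁, λ₁αβ, λ₂, λ₂β, λ₃, λ₃α`. -/
def tripleSplit (F : Type*) [Field F] :
    (PfisterSpace F × PfisterSpace F × PfisterSpace F) ≃ₗ[F] (Fin 6 → F) × (Fin 6 → F) where
  toFun v :=
    (![v.1.2.1, v.1.1.2, v.2.1.2.1, v.2.1.2.2, v.2.2.2.2, v.2.2.1.2],
     ![v.1.1.1, v.1.2.2, v.2.1.1.1, v.2.1.1.2, v.2.2.1.1, v.2.2.2.1])
  invFun u :=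
    (((u.2 0, u.1 1), (u.1 0, u.2 1)), ((u.2 2, u.2 3), (u.1 2, u.1 3)),
      ((u.2 4, u.1 5), (u.2 5, u.1 4)))
  map_add' v w := by ext j <;> fin_cases j <;> rfl
  map_smul' c v := by ext j <;> fin_cases j <;> rfl
  left_inv v := rfl
  right_inv u := by ext j <;> fin_cases j <;> rfl

/-- The analogous permutation for `⟨1,c₂,c₁,c₁c₂⟩ ⊗ ⟨⟨c₃,c₄⟩⟩`: the summand
`⟨1,c₂,c₁⟩ ⊗ ⟨⟨c₃,c₄⟩⟩` is split as in `tripleSplit`, and the four coordinates of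
`c₁c₂⟨⟨c₃,c₄⟩⟩` are appended to the complement. -/
def quadrupleSplit (F : Type*) [Field F] :
    ((PfisterSpace F × PfisterSpace F) × (PfisterSpace F × PfisterSpace F)) ≃ₗ[F]
      (Fin 6 → F) × (Fin 10 → F) where
  toFun v :=
    (![v.1.1.2.1, v.1.1.1.2, v.1.2.2.1, v.1.2.2.2, v.2.1.2.2, v.2.1.1.2],
     ![v.1.1.1.1, v.1.1.2.2, v.1.2.1.1, v.1.2.1.2, v.2.1.1.1, v.2.1.2.1,
       v.2.2.1.1, v.2.2.1.2, v.2.2.2.1, v.2.2.2.2])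
  invFun u :=
    ((((u.2 0, u.1 1), (u.1 0, u.2 1)), ((u.2 2, u.2 3), (u.1 2, u.1 3))),
      (((u.2 4, u.1 5), (u.2 5, u.1 4)), ((u.2 6, u.2 7), (u.2 8, u.2 9))))
  map_add' v w := by ext j <;> fin_cases j <;> rfl
  map_smul' c v := by ext j <;> fin_cases j <;> rfl
  left_inv v := rfl
  right_inv u := by ext j <;> fin_cases j <;> rfl

theorem albert_disc {F : Type*} [Field F] {α β l₁ l₂ l₃ : F} (hα : α ≠ 0) (hβ : β ≠ 0)
    (hl₁ : l₁ ≠ 0) (hl₂ : l₂ ≠ 0) (hl₃ : l₃ ≠ 0) :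
    ∃ t : F, t ≠ 0 ∧
      (l₁ * α) * (l₁ * β) * (l₂ * α) * (l₂ * (α * β)) * (l₃ * (α * β)) * (l₃ * β) = t ^ 2 :=
  ⟨l₁ * l₂ * l₃ * α ^ 2 * β ^ 2, by simp [*], by ring⟩

theorem statement12 (F : Type*) [Field F] (hchar : (2 : F) ≠ 0)
    (i : F) (hi : i ^ 2 = -1)
    (α β : F) (hα : α ≠ 0) (hβ : β ≠ 0)
    (l₁ l₂ l₃ : F) (hl₁ : l₁ ≠ 0) (hl₂ : l₂ ≠ 0) (hl₃ : l₃ ≠ 0) :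
    -- ρ contains the subform σ = λ₁⟨α,β⟩ ⊥ λ₂⟨α,αβ⟩ ⊥ λ₃⟨αβ,β⟩ …
    (∃ ψ' : QuadraticForm F (Fin 6 → F),
      QuadraticMap.Equivalent
        ((l₁ • pfister2Diag F α β).prod
          ((l₂ • pfister2Diag F α β).prod (l₃ • pfister2Diag F α β)))
        ((weightedSumSquares F
            ![l₁ * α, l₁ * β, l₂ * α, l₂ * (α * β), l₃ * (α * β), l₃ * β]).prod ψ')) ∧
    -- … which has trivial discriminant and hence is an Albert form, …
    (∃ t : F, t ≠ 0 ∧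
      (l₁ * α) * (l₁ * β) * (l₂ * α) * (l₂ * (α * β)) * (l₃ * (α * β)) * (l₃ * β)
        = t ^ 2) ∧
    -- … and consequently every 4-fold Pfister form over F contains an Albert subform.
    (∀ c₁ c₂ c₃ c₄ : F, c₁ ≠ 0 → c₂ ≠ 0 → c₃ ≠ 0 → c₄ ≠ 0 →
      ∃ (w : Fin 6 → F) (ψ' : QuadraticForm F (Fin 10 → F)),
        (∀ j, w j ≠ 0) ∧ (∃ t : F, t ≠ 0 ∧ (∏ j, w j) = t ^ 2) ∧
        QuadraticMap.Equivalent (pfister4Diag F c₁ c₂ c₃ c₄)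
          ((weightedSumSquares F w).prod ψ')) := by
  refine ⟨⟨weightedSumSquares F ![l₁, l₁ * (α * β), l₂, l₂ * β, l₃, l₃ * α],
      ⟨⟨tripleSplit F, ?_⟩⟩⟩, albert_disc hα hβ hl₁ hl₂ hl₃, ?_⟩
  · rintro ⟨⟨⟨a, b⟩, c, d⟩, ⟨⟨e, f⟩, g, h⟩, ⟨⟨k, l⟩, m, n⟩⟩
    simp [tripleSplit, pfister2Diag, diag1, weightedSumSquares_apply, Fin.sum_univ_succ]
    ring
  · intro c₁ c₂ c₃ c₄ h₁ h₂ h₃ h₄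
    -- The multipliers are `λ₁ = 1`, `λ₂ = c₂`, `λ₃ = c₁`, with `α = c₃` and `β = c₄`.
    refine ⟨![1 * c₃, 1 * c₄, c₂ * c₃, c₂ * (c₃ * c₄), c₁ * (c₃ * c₄), c₁ * c₄],
      weightedSumSquares F ![1, c₃ * c₄, c₂, c₂ * c₄, c₁, c₁ * c₃,
        c₁ * c₂, c₁ * c₂ * c₄, c₁ * c₂ * c₃, c₁ * c₂ * (c₃ * c₄)], ?_, ?_,
      ⟨⟨quadrupleSplit F, ?_⟩⟩⟩
    · intro j
      fin_cases j <;> simp [*]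
    · rw [Fin.prod_univ_six]
      exact albert_disc h₃ h₄ one_ne_zero h₂ h₁
    · rintro ⟨⟨⟨⟨a, b⟩, c, d⟩, ⟨⟨e, f⟩, g, h⟩⟩, ⟨⟨k, l⟩, m, n⟩, ⟨⟨p, q⟩, r, s⟩⟩
      simp [quadrupleSplit, pfister4Diag, pfister3Diag, pfister2Diag, diag1,
        weightedSumSquares_apply, Fin.sum_univ_succ]
      ring

end
end
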